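/- arXiv:2502.12773 — 2 statements merged into one kernel-verified Lean document; each statement's English description precedes it below -/
import Mathlib

section
/- Let G be a connected bridgeless finite simple cubic graph with n ≥ 8 vertices and m edges whose flow polynomial F(G,t) has only real roots, write F(G,t) = Σ_{i=0}^{m−n+1} c_i t^i, and let the b_i be defined by Σ_{i=0}^{m−n+1} b_i t^i = (t+1)(t+2)^{n/2−2}(t+3)^2. Then b_i = |c_i| for all 0 ≤ i ≤ m−n+1 if and only if G is isomorphic to the graph G*. -/
open Polynomial

/-- The flow polynomial of a finite simple graph `G`:
`F(G,t) = Σ_{Z ⊆ E(G)} (−1)^{m−|Z|} t^{|Z|+c(Z)−n}`, where `c(Z)` is the number of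
connected components of the spanning subgraph with edge set `Z`. -/
noncomputable def flowPoly {V : Type} [Fintype V] (G : SimpleGraph V) : Polynomial ℤ :=
  ∑ Z ∈ G.edgeSet.toFinite.toFinset.powerset,
    (-1 : ℤ) ^ (G.edgeSet.toFinite.toFinset.card - Z.card) •
      (X : Polynomial ℤ) ^
        (Z.card + Nat.card (SimpleGraph.fromEdgeSet (↑Z : Set (Sym2 V))).ConnectedComponent
          - Fintype.card V)

/-- The number of edges of `G`. -/
noncomputable def edgeCount {V : Type} [Fintype V] (G : SimpleGraph V) : ℕ :=
  G.edgeSet.toFinite.toFinset.card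

/-- Vertex type of the graph `G*`: `a1,…,a4`, `b1,…,b4`, and `u_j = (j,0)`, `v_j = (j,1)`
for `j = 0,…,s−1` (0-indexed). -/
abbrev GStarV (s : ℕ) : Type := Fin 4 ⊕ Fin 4 ⊕ (Fin s × Fin 2)

/-- One orientation of each edge of `G*` (symmetrized by `SimpleGraph.fromRel`):
`K4` on the `a`'s minus `a1a2`, `K4` on the `b`'s minus `b1b2`, the ladder edges
`u_j v_j`, `u_j u_{j+1}`, `v_j v_{j+1}`, and the connecting edges
`a1u_1, a2v_1, u_s b1, v_s b2` (or `a1b1, a2b2` when `s = 0`). -/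
def gStarRel (s : ℕ) : GStarV s → GStarV s → Prop
  | Sum.inl i, Sum.inl j => ¬((i = 0 ∧ j = 1) ∨ (i = 1 ∧ j = 0))
  | Sum.inr (Sum.inl i), Sum.inr (Sum.inl j) => ¬((i = 0 ∧ j = 1) ∨ (i = 1 ∧ j = 0))
  | Sum.inr (Sum.inr p), Sum.inr (Sum.inr q) =>
      (p.1 = q.1 ∧ p.2 ≠ q.2) ∨ (p.2 = q.2 ∧ q.1.val = p.1.val + 1)
  | Sum.inl i, Sum.inr (Sum.inr p) =>
      (i = 0 ∧ p.1.val = 0 ∧ p.2 = 0) ∨ (i = 1 ∧ p.1.val = 0 ∧ p.2 = 1)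
  | Sum.inr (Sum.inr p), Sum.inr (Sum.inl i) =>
      (p.1.val + 1 = s ∧ p.2 = 0 ∧ i = 0) ∨ (p.1.val + 1 = s ∧ p.2 = 1 ∧ i = 1)
  | Sum.inl i, Sum.inr (Sum.inl j) =>
      s = 0 ∧ ((i = 0 ∧ j = 0) ∨ (i = 1 ∧ j = 1))
  | _, _ => False

/-- The graph `G*` with `n = 2s + 8` vertices. -/
def gStar (s : ℕ) : SimpleGraph (GStarV s) := SimpleGraph.fromRel (gStarRel s)

/-!
Over a field `K` of characteristic two flows need no orientation, and
`F(G,t) = Σ_Y (-1)^|Y| t^(dim Φ(E∖Y))`, where `Φ(Z)` is the space of `K`-flows supported on `Z`;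
at `t = |K|` this counts the nowhere-zero flows. For bridgeless `G` the second coefficient of `F`
is therefore minus the number of classes of edges, two edges `e`, `f` being equivalent when
`Φ(E∖e) = Φ(E∖f)`, that is, when they are equal or form a 2-edge cut.

Comparing this coefficient with that of `(t+1)(t+2)^(n/2-2)(t+3)^2` shows that there are `n/2 - 3`
fewer classes than edges, which yields as many 2-edge cuts, whose sides can be chosen to form a
laminar family. In a cubic graph the two sides of a 2-edge cut are even and have at least four
vertices, so counting forces the family to be a chain of sets with `4, 6, …, n - 4` vertices. The
successive differences are then the rungs of a ladder, and the two ends, with four vertices each,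
are copies of `K₄` minus an edge.

Conversely, a flow on `G*` is determined by its values on one rail of the ladder and on two edges
at each end. Counting the nowhere-zero ones over all fields with `2^k` elements gives
`F(G*,t) = (t-1)(t-2)^(n/2-2)(t-3)^2`.
-/

section FlowSpace

variable {V : Type*} [Fintype V]

/-- The `K`-valued flows supported on the edge set `Z`. Edges carry no orientation here, so this
is the usual flow space only in characteristic two. -/
def flowSpace (K : Type*) [Field K] (Z : Finset (Sym2 V)) : Submodule K (Sym2 V → K) where
  carrier := {φ | (∀ e ∉ Z, φ e = 0) ∧ ∀ v, ∑ w, φ s(v, w) = 0}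
  zero_mem' := by simp
  add_mem' := by
    rintro φ ψ ⟨hφ, hφ'⟩ ⟨hψ, hψ'⟩
    exact ⟨fun e he => by simp [hφ e he, hψ e he],
      fun v => by simp [Finset.sum_add_distrib, hφ' v, hψ' v]⟩
  smul_mem' := by
    rintro c φ ⟨hφ, hφ'⟩
    exact ⟨fun e he => by simp [hφ e he], fun v => by simp [← Finset.mul_sum, hφ' v]⟩

variable {K : Type*} [Field K] {Y Z : Finset (Sym2 V)} {φ : Sym2 V → K}

lemma mem_flowSpace :
    φ ∈ flowSpace K Z ↔ (∀ e ∉ Z, φ e = 0) ∧ ∀ v, ∑ w, φ s(v, w) = 0 :=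
  Iff.rfl

lemma mem_flowSpace_iff_of_subset (h : Y ⊆ Z) :
    φ ∈ flowSpace K Y ↔ φ ∈ flowSpace K Z ∧ ∀ e ∈ Z, e ∉ Y → φ e = 0 := by
  simp only [mem_flowSpace]
  refine ⟨fun hφ => ⟨⟨fun e he => hφ.1 e (mt (@h e) he), hφ.2⟩, fun e _ => hφ.1 e⟩,
    fun hφ => ⟨fun e he => ?_, hφ.1.2⟩⟩
  by_cases heZ : e ∈ Z
  exacts [hφ.2 e heZ he, hφ.1.1 e heZ]

lemma flowSpace_mono (h : Y ⊆ Z) : flowSpace K Y ≤ flowSpace K Z :=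
  fun _ hφ => ((mem_flowSpace_iff_of_subset h).1 hφ).1

variable [DecidableEq V]

lemma sum_mk_eq_sum_filter_mem {M : Type*} [AddCommMonoid M] (φ : Sym2 V → M) (v : V) :
    ∑ w, φ s(v, w) = ∑ e with v ∈ e, φ e := by
  have himage : ({e | v ∈ e} : Finset (Sym2 V)) = Finset.univ.image fun w => s(v, w) := by
    ext e
    simp [Sym2.mem_iff_exists, eq_comm]
  rw [himage, Finset.sum_image fun _ _ _ _ h => Sym2.congr_right.1 h]

/-- The unoriented vertex-edge incidence matrix of the edge set `Z`. -/
def incidenceMatrix (K : Type*) [Field K] (Z : Finset (Sym2 V)) : Matrix V Z K :=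
  Matrix.of fun v e => if v ∈ e.1 then 1 else 0

lemma incidenceMatrix_mulVec_restrict (hφ : ∀ e ∉ Z, φ e = 0) (v : V) :
    (incidenceMatrix K Z).mulVec (fun e => φ e) v = ∑ w, φ s(v, w) := by
  rw [sum_mk_eq_sum_filter_mem, Finset.sum_filter, ← Finset.sum_subset (Finset.subset_univ Z)
    fun e _ he => by simp [hφ e he], ← Finset.sum_coe_sort Z]
  simp [Matrix.mulVec, dotProduct, incidenceMatrix]

lemma incidenceMatrix_transpose_mulVec (f : V → K) {u v : V} (huv : u ≠ v) (h : s(u, v) ∈ Z) :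
    (incidenceMatrix K Z).transpose.mulVec f ⟨s(u, v), h⟩ = f u + f v := by
  have hends : ({a | a ∈ s(u, v)} : Finset V) = {u, v} := by ext; simp
  simp [Matrix.mulVec, dotProduct, incidenceMatrix, ← Finset.sum_filter, -Sym2.mem_iff,
    hends, Finset.sum_pair huv]

lemma finrank_flowSpace_eq_finrank_ker :
    Module.finrank K (flowSpace K Z) =
      Module.finrank K (LinearMap.ker (incidenceMatrix K Z).mulVecLin) := by
  refine LinearEquiv.finrank_eq (LinearEquiv.ofBijective
    (((LinearMap.funLeft K K ((↑) : Z → Sym2 V)).comp (flowSpace K Z).subtype).codRestrict _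
      fun φ => ?_) ⟨fun φ ψ h => ?_, fun g => ?_⟩)
  · exact LinearMap.mem_ker.2
      (funext fun v => (incidenceMatrix_mulVec_restrict φ.2.1 v).trans (φ.2.2 v))
  · ext e
    by_cases he : e ∈ Z
    · exact congrFun (congrArg Subtype.val h) ⟨e, he⟩
    · rw [φ.2.1 e he, ψ.2.1 e he]
  · let φ : Sym2 V → K := fun e => if h : e ∈ Z then g.1 ⟨e, h⟩ else 0
    have hφ : ∀ e ∉ Z, φ e = 0 := fun e he => dif_neg he
    have hφg : (fun e : Z => φ e) = g.1 := funext fun e => dif_pos e.2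
    refine ⟨⟨φ, hφ, fun v => ?_⟩, Subtype.ext hφg⟩
    rw [← incidenceMatrix_mulVec_restrict hφ, hφg]
    exact congrFun (LinearMap.mem_ker.1 g.2) v

lemma ker_incidenceMatrix_transpose [CharP K 2] (hZ : ∀ e ∈ Z, ¬ e.IsDiag) :
    LinearMap.ker (incidenceMatrix K Z).transpose.mulVecLin =
      LinearMap.range (LinearMap.funLeft K K
        (SimpleGraph.fromEdgeSet (Z : Set (Sym2 V))).connectedComponentMk) := by
  ext f
  rw [LinearMap.mem_ker, LinearMap.mem_range]
  constructor
  · intro hf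
    have hadj : ∀ u v, (SimpleGraph.fromEdgeSet (Z : Set (Sym2 V))).Adj u v → f u = f v := by
      intro u v huv
      rw [← CharTwo.add_eq_zero, ← incidenceMatrix_transpose_mulVec f huv.2 huv.1]
      exact congrFun hf _
    have hwalk : ∀ u v, (SimpleGraph.fromEdgeSet (Z : Set (Sym2 V))).Walk u v → f u = f v := by
      intro u v p
      induction p with
      | nil => rfl
      | cons h _ ih => exact (hadj _ _ h).trans ih
    exact ⟨fun c => c.lift f fun u v p _ => hwalk u v p, rfl⟩
  · rintro ⟨g, rfl⟩
    ext ⟨⟨u, v⟩, he⟩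
    have huv : u ≠ v := hZ _ he
    have hcomp := SimpleGraph.ConnectedComponent.sound
      (SimpleGraph.Adj.reachable (G := .fromEdgeSet (Z : Set (Sym2 V))) ⟨he, huv⟩)
    rw [Matrix.mulVecLin_apply]
    exact (incidenceMatrix_transpose_mulVec _ huv he).trans (by
      rw [LinearMap.funLeft_apply, LinearMap.funLeft_apply, hcomp, CharTwo.add_self_eq_zero]; rfl)

omit [DecidableEq V] in
lemma finrank_flowSpace_add_card [CharP K 2] (hZ : ∀ e ∈ Z, ¬ e.IsDiag) :
    Module.finrank K (flowSpace K Z) + Fintype.card V = Z.card +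
      Nat.card (SimpleGraph.fromEdgeSet (Z : Set (Sym2 V))).ConnectedComponent := by
  classical
  have hrow := LinearMap.finrank_range_add_finrank_ker (incidenceMatrix K Z).mulVecLin
  have hcol := LinearMap.finrank_range_add_finrank_ker (incidenceMatrix K Z).transpose.mulVecLin
  have hrank := Matrix.rank_transpose (incidenceMatrix K Z)
  rw [Matrix.rank, Matrix.rank] at hrank
  have hsurj : Function.Surjective
      (SimpleGraph.fromEdgeSet (Z : Set (Sym2 V))).connectedComponentMk := Quot.mk_surjective
  rw [ker_incidenceMatrix_transpose hZ, LinearMap.finrank_range_of_inj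
    (LinearMap.funLeft_injective_of_surjective K K _ hsurj)] at hcol
  simp only [Module.finrank_fintype_fun_eq_card, Fintype.card_coe] at hrow hcol
  rw [finrank_flowSpace_eq_finrank_ker, Nat.card_eq_fintype_card]
  omega

end FlowSpace

section FlowPolynomial

variable {V : Type} [Fintype V] (G : SimpleGraph V) [Fintype G.edgeSet]

lemma flowPoly_eq_sum_flowSpace [DecidableEq V] (K : Type*) [Field K] [CharP K 2] :
    flowPoly G = ∑ Y ∈ G.edgeFinset.powerset,
      (-1 : ℤ) ^ Y.card • X ^ Module.finrank K (flowSpace K (G.edgeFinset \ Y)) := by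
  have hinvol : ∀ Z ∈ G.edgeFinset.powerset, G.edgeFinset \ (G.edgeFinset \ Z) = Z := fun Z hZ =>
    Finset.sdiff_sdiff_eq_self (Finset.mem_powerset.1 hZ)
  rw [flowPoly, show G.edgeSet.toFinite.toFinset = G.edgeFinset from Set.toFinite_toFinset _]
  refine Finset.sum_nbij' (G.edgeFinset \ ·) (G.edgeFinset \ ·) (by simp) (by simp) hinvol hinvol
    fun Z hZ => ?_
  rw [hinvol Z hZ, Finset.card_sdiff_of_subset (Finset.mem_powerset.1 hZ),
    ← finrank_flowSpace_add_card (K := K) fun e he => G.not_isDiag_of_mem_edgeSet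
      (G.mem_edgeFinset.1 (Finset.mem_powerset.1 hZ he)), Nat.add_sub_cancel]

lemma eval_flowPoly (K : Type*) [Field K] [Fintype K] [CharP K 2] :
    (flowPoly G).eval (Fintype.card K : ℤ) =
      Nat.card {φ : flowSpace K G.edgeFinset // ∀ e ∈ G.edgeFinset, φ.1 e ≠ 0} := by
  classical
  have hcount := Finset.inclusion_exclusion_card_inf_compl G.edgeFinset
    fun e => ({φ : flowSpace K G.edgeFinset | φ.1 e = 0} : Finset _)
  have hnowhere : (G.edgeFinset.inf fun e =>
      ({φ : flowSpace K G.edgeFinset | φ.1 e = 0} : Finset _)ᶜ) =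
      ({φ | ∀ e ∈ G.edgeFinset, φ.1 e ≠ 0} : Finset _) := by
    ext φ
    simp [Finset.mem_inf]
  rw [hnowhere, ← Fintype.card_subtype, ← Nat.card_eq_fintype_card] at hcount
  rw [hcount, flowPoly_eq_sum_flowSpace G K, Polynomial.eval_finsetSum]
  refine Finset.sum_congr rfl fun Y _ => ?_
  rw [eval_smul, eval_pow, eval_X, smul_eq_mul, ← Nat.cast_pow,
    ← Module.card_eq_pow_finrank (K := K)]
  congr 2
  rw [← Fintype.card_coe]
  refine Fintype.card_congr ⟨fun φ => ⟨⟨φ.1, flowSpace_mono Finset.sdiff_subset φ.2⟩, ?_⟩,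
    fun φ => ⟨φ.1.1, ?_⟩, fun φ => rfl, fun φ => rfl⟩
  · simp only [Finset.mem_inf, Finset.mem_filter_univ]
    exact fun e he => φ.2.1 e (by simp [he])
  · have hzero := φ.2
    simp only [Finset.mem_inf, Finset.mem_filter_univ] at hzero
    rw [mem_flowSpace_iff_of_subset Finset.sdiff_subset]
    exact ⟨φ.1.2, fun e he heY => hzero e (by simpa [he] using heY)⟩

omit [Fintype G.edgeSet] in
variable {G} in
lemma flowPoly_eq_of_iso {W : Type} [Fintype W] {H : SimpleGraph W} (f : G ≃g H) :
    flowPoly G = flowPoly H := by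
  have hmem (u v : V) (Z : Finset (Sym2 V)) :
      s(f u, f v) ∈ Z.map f.toEquiv.toEmbedding.sym2Map ↔ s(u, v) ∈ Z :=
    Finset.mem_map' _ (a := s(u, v))
  have hedge : H.edgeSet.toFinite.toFinset =
      G.edgeSet.toFinite.toFinset.map f.toEquiv.toEmbedding.sym2Map := by
    ext e
    induction e with | _ u v
    obtain ⟨u, rfl⟩ := f.surjective u
    obtain ⟨v, rfl⟩ := f.surjective v
    simp [hmem, f.map_adj_iff]
  refine Finset.sum_nbij (Finset.map f.toEquiv.toEmbedding.sym2Map) (fun Z hZ => ?_)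
    (Finset.map_injective _).injOn (fun Z hZ => ?_) fun Z _ => ?_
  · rw [hedge, Finset.mem_powerset, Finset.map_subset_map]
    exact Finset.mem_powerset.1 hZ
  · rw [hedge, Finset.mem_coe, Finset.mem_powerset, Finset.subset_map_iff] at hZ
    obtain ⟨Y, hY, rfl⟩ := hZ
    exact ⟨Y, Finset.mem_powerset.2 hY, rfl⟩
  · let fZ : SimpleGraph.fromEdgeSet (Z : Set (Sym2 V)) ≃g
        SimpleGraph.fromEdgeSet (Z.map f.toEquiv.toEmbedding.sym2Map : Set (Sym2 W)) :=
      ⟨f.toEquiv, fun {u v} => by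
        simp only [SimpleGraph.fromEdgeSet_adj, Finset.mem_coe]
        exact and_congr (hmem u v Z) f.injective.ne_iff⟩
    rw [hedge, Finset.card_map, Finset.card_map, Nat.card_congr fZ.connectedComponentEquiv,
      Fintype.card_congr f.toEquiv]

end FlowPolynomial

section EdgeCut

variable {V : Type*} [Fintype V] [DecidableEq V] {G : SimpleGraph V} [DecidableRel G.Adj]
  {S T : Finset V}

variable (G) in
/-- The cut `δS`: the edges of `G` with exactly one end in `S`. -/
def edgeCut (S : Finset V) : Finset (Sym2 V) :=
  (G.interedges S Sᶜ).image fun p => s(p.1, p.2)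

lemma mk_mem_edgeCut {u v : V} : s(u, v) ∈ edgeCut G S ↔ G.Adj u v ∧ ¬(u ∈ S ↔ v ∈ S) := by
  simp only [edgeCut, Finset.mem_image, Prod.exists, SimpleGraph.mk_mem_interedges_iff,
    Finset.mem_compl, Sym2.eq_iff]
  constructor
  · rintro ⟨a, b, ⟨ha, hb, hab⟩, ⟨rfl, rfl⟩ | ⟨rfl, rfl⟩⟩
    exacts [⟨hab, by tauto⟩, ⟨hab.symm, by tauto⟩]
  · rintro ⟨huv, hS⟩
    by_cases hu : u ∈ S
    exacts [⟨u, v, ⟨hu, by tauto, huv⟩, .inl ⟨rfl, rfl⟩⟩,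
      ⟨v, u, ⟨by tauto, hu, huv.symm⟩, .inr ⟨rfl, rfl⟩⟩]

lemma mk_injOn_interedges_compl :
    Set.InjOn (fun p : V × V => s(p.1, p.2)) (G.interedges S Sᶜ : Set (V × V)) := by
  rintro ⟨a, b⟩ hab ⟨c, d⟩ hcd h
  simp only [Finset.mem_coe, SimpleGraph.mk_mem_interedges_iff, Finset.mem_compl] at hab hcd
  rcases Sym2.eq_iff.1 h with ⟨rfl, rfl⟩ | ⟨rfl, rfl⟩
  exacts [rfl, absurd hab.1 hcd.2.1]

lemma card_edgeCut : (edgeCut G S).card = (G.interedges S Sᶜ).card :=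
  Finset.card_image_of_injOn mk_injOn_interedges_compl

lemma edgeCut_subset_edgeFinset : edgeCut G S ⊆ G.edgeFinset := by
  rintro ⟨u, v⟩ h
  exact G.mem_edgeFinset.2 (mk_mem_edgeCut.1 h).1

lemma edgeCut_compl : edgeCut G Sᶜ = edgeCut G S := by
  ext ⟨u, v⟩
  exact mk_mem_edgeCut.trans (by simp [mk_mem_edgeCut, not_iff_not])

lemma edgeCut_symmDiff : edgeCut G (symmDiff S T) = symmDiff (edgeCut G S) (edgeCut G T) := by
  ext ⟨u, v⟩
  rw [Finset.mem_symmDiff]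
  change s(u, v) ∈ _ ↔ s(u, v) ∈ _ ∧ s(u, v) ∉ _ ∨ s(u, v) ∈ _ ∧ s(u, v) ∉ _
  simp only [mk_mem_edgeCut, Finset.mem_symmDiff]
  tauto

lemma exists_mem_edgeCut_of_reachable {H : SimpleGraph V} (hHG : H ≤ G) {u v : V}
    (h : H.Reachable u v) (hu : u ∈ S) (hv : v ∉ S) : ∃ e ∈ H.edgeSet, e ∈ edgeCut G S := by
  obtain ⟨p⟩ := h
  obtain ⟨d, -, hfst, hsnd⟩ := p.exists_boundary_dart S hu hv
  exact ⟨s(d.fst, d.snd), d.adj, mk_mem_edgeCut.2 ⟨hHG d.adj, by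
    rw [Finset.mem_coe] at hfst hsnd; tauto⟩⟩

lemma two_le_card_edgeCut (hconn : G.Connected) (hbridgeless : ∀ e, ¬ G.IsBridge e)
    (hS : S.Nonempty) (hS' : Sᶜ.Nonempty) : 2 ≤ (edgeCut G S).card := by
  obtain ⟨u, hu⟩ := hS
  obtain ⟨v, hv⟩ := hS'
  rw [Finset.mem_compl] at hv
  obtain ⟨⟨a, b⟩, -, he⟩ := exists_mem_edgeCut_of_reachable le_rfl (hconn u v) hu hv
  obtain ⟨f, hf, hf'⟩ := exists_mem_edgeCut_of_reachable (G.deleteEdges_le {s(a, b)})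
    ((hconn.connected_delete_edge_of_not_isBridge (hbridgeless s(a, b))) u v) hu hv
  rw [SimpleGraph.edgeSet_deleteEdges] at hf
  exact Finset.one_lt_card.2 ⟨_, he, f, hf', fun h => hf.2 h.symm⟩

lemma card_edgeCut_atoms :
    (edgeCut G (S ∩ T)).card + (edgeCut G (S \ T)).card + (edgeCut G (T \ S)).card +
      (edgeCut G (S ∪ T)).card = 2 * (edgeCut G S ∪ edgeCut G T).card := by
  have hcount : ∀ A ⊆ G.edgeFinset, A.card = ∑ e ∈ G.edgeFinset, if e ∈ A then 1 else 0 := by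
    intro A hA
    rw [← Finset.card_filter, Finset.filter_mem_eq_inter, Finset.inter_eq_right.2 hA]
  simp only [hcount _ edgeCut_subset_edgeFinset,
    hcount _ (Finset.union_subset edgeCut_subset_edgeFinset edgeCut_subset_edgeFinset),
    ← Finset.sum_add_distrib, Finset.mul_sum]
  refine Finset.sum_congr rfl fun e he => ?_
  induction e with | _ u v =>
  have huv : G.Adj u v := G.mem_edgeFinset.1 he
  simp only [mk_mem_edgeCut, Finset.mem_union, Finset.mem_inter, Finset.mem_sdiff, huv, true_and]
  by_cases huS : u ∈ S <;> by_cases hvS : v ∈ S <;> by_cases huT : u ∈ T <;>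
    by_cases hvT : v ∈ T <;> simp [huS, hvS, huT, hvT]

end EdgeCut

section Coefficient

lemma sum_powerset_filter_constant_neg_one_pow {α β : Type*} [DecidableEq β]
    (s : Finset α) (g : α → β) :
    ∑ t ∈ s.powerset with t.Nonempty ∧ ∀ a ∈ t, ∀ b ∈ t, g a = g b, (-1 : ℤ) ^ t.card =
      -(s.image g).card := by
  classical
  let fiber (c : β) : Finset α := {a ∈ s | g a = c}
  have hunion : {t ∈ s.powerset | t.Nonempty ∧ ∀ a ∈ t, ∀ b ∈ t, g a = g b} =
      (s.image g).biUnion fun c => (fiber c).powerset.erase ∅ := by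
    ext t
    simp only [Finset.mem_filter, Finset.mem_powerset, Finset.mem_biUnion, Finset.mem_image,
      Finset.mem_erase, ← Finset.nonempty_iff_ne_empty, fiber, Finset.subset_iff]
    constructor
    · rintro ⟨hts, ⟨a, ha⟩, hconst⟩
      exact ⟨g a, ⟨a, hts ha, rfl⟩, ⟨a, ha⟩, fun b hb => ⟨hts hb, hconst b hb a ha⟩⟩
    · rintro ⟨c, -, hne, ht⟩
      exact ⟨fun a ha => (ht ha).1, hne, fun a ha b hb => (ht ha).2.trans (ht hb).2.symm⟩
  have hdisj : (s.image g : Set β).PairwiseDisjoint fun c => (fiber c).powerset.erase ∅ := by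
    refine fun c _ d _ hcd => Finset.disjoint_left.2 fun t htc htd => hcd ?_
    simp only [Finset.mem_erase, Finset.mem_powerset, ← Finset.nonempty_iff_ne_empty] at htc htd
    obtain ⟨a, ha⟩ := htc.1
    exact (Finset.mem_filter.1 (htc.2 ha)).2.symm.trans (Finset.mem_filter.1 (htd.2 ha)).2
  rw [hunion, Finset.sum_biUnion hdisj, Finset.card_eq_sum_ones, Nat.cast_sum,
    ← Finset.sum_neg_distrib]
  refine Finset.sum_congr rfl fun c hc => ?_
  obtain ⟨a, ha, hac⟩ := Finset.mem_image.1 hc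
  have hfiber : (fiber c).Nonempty := ⟨a, Finset.mem_filter.2 ⟨ha, hac⟩⟩
  have hempty := Finset.sum_erase_add (fiber c).powerset (fun t => (-1 : ℤ) ^ t.card)
    (Finset.empty_mem_powerset _)
  rw [Finset.sum_powerset_neg_one_pow_card_of_nonempty hfiber] at hempty
  simpa using eq_neg_of_add_eq_zero_left hempty

lemma card_connectedComponent_eq_one_iff {V : Type*} {G : SimpleGraph V} :
    Nat.card G.ConnectedComponent = 1 ↔ G.Connected := by
  rw [Nat.card_eq_one_iff_unique, SimpleGraph.connected_iff]
  constructor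
  · rintro ⟨hsub, ⟨c⟩⟩
    exact ⟨fun u v => SimpleGraph.ConnectedComponent.exact (Subsingleton.elim _ _),
      c.nonempty_supp.to_type⟩
  · rintro ⟨hpre, ⟨v⟩⟩
    exact ⟨hpre.subsingleton_connectedComponent, ⟨G.connectedComponentMk v⟩⟩

variable {V : Type*} [DecidableEq V] {G : SimpleGraph V} [Fintype G.edgeSet]

lemma fromEdgeSet_edgeFinset_sdiff (Y : Finset (Sym2 V)) :
    SimpleGraph.fromEdgeSet (G.edgeFinset \ Y : Finset (Sym2 V)) = G.deleteEdges (Y : Set _) := by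
  rw [Finset.coe_sdiff, SimpleGraph.coe_edgeFinset, SimpleGraph.fromEdgeSet_sdiff,
    SimpleGraph.fromEdgeSet_edgeSet, SimpleGraph.deleteEdges]

variable [Fintype V] {K : Type*} [Field K]

lemma finrank_flowSpace_sdiff_add_card [CharP K 2] {Y : Finset (Sym2 V)} (hY : Y ⊆ G.edgeFinset) :
    Module.finrank K (flowSpace K (G.edgeFinset \ Y)) + Fintype.card V + Y.card =
      G.edgeFinset.card + Nat.card (G.deleteEdges (Y : Set _)).ConnectedComponent := by
  have hrank := finrank_flowSpace_add_card (K := K) (Z := G.edgeFinset \ Y) fun e he =>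
    G.not_isDiag_of_mem_edgeSet (G.mem_edgeFinset.1 (Finset.mem_sdiff.1 he).1)
  rw [fromEdgeSet_edgeFinset_sdiff, Finset.card_sdiff_of_subset hY] at hrank
  have := Finset.card_le_card hY
  omega

omit [DecidableEq V] in
lemma finrank_flowSpace_edgeFinset [CharP K 2] (hconn : G.Connected) :
    Module.finrank K (flowSpace K G.edgeFinset) + Fintype.card V = G.edgeFinset.card + 1 := by
  classical
  have hrank := finrank_flowSpace_sdiff_add_card (K := K) (Finset.empty_subset G.edgeFinset)
  rwa [Finset.sdiff_empty, Finset.coe_empty, SimpleGraph.deleteEdges_empty, Finset.card_empty,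
    card_connectedComponent_eq_one_iff.2 hconn] at hrank

lemma finrank_flowSpace_sdiff_singleton [CharP K 2] (hconn : G.Connected) {e : Sym2 V}
    (he : e ∈ G.edgeFinset) (hbridge : ¬ G.IsBridge e) :
    Module.finrank K (flowSpace K (G.edgeFinset \ {e})) + Fintype.card V = G.edgeFinset.card := by
  have hrank := finrank_flowSpace_sdiff_add_card (K := K) (Finset.singleton_subset_iff.2 he)
  induction e with | _ u v =>
  rw [Finset.coe_singleton, Finset.card_singleton, card_connectedComponent_eq_one_iff.2
    (hconn.connected_delete_edge_of_not_isBridge hbridge)] at hrank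
  omega

lemma flowSpace_sdiff_eq_of_constant {Y : Finset (Sym2 V)} {e : Sym2 V} (he : e ∈ Y)
    (hY : ∀ f ∈ Y, flowSpace K (G.edgeFinset \ {e}) = flowSpace K (G.edgeFinset \ {f})) :
    flowSpace K (G.edgeFinset \ Y) = flowSpace K (G.edgeFinset \ {e}) := by
  refine le_antisymm (flowSpace_mono (Finset.sdiff_subset_sdiff subset_rfl
    (Finset.singleton_subset_iff.2 he))) fun φ hφ => ?_
  refine (mem_flowSpace_iff_of_subset Finset.sdiff_subset).2
    ⟨flowSpace_mono Finset.sdiff_subset hφ, fun f hf hfY => ?_⟩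
  have hfY : f ∈ Y := by simpa [hf] using hfY
  exact ((hY f hfY ▸ hφ : φ ∈ flowSpace K (G.edgeFinset \ {f}))).1 f (by simp)

lemma finrank_flowSpace_sdiff_eq_iff [CharP K 2] (hconn : G.Connected)
    (hbridgeless : ∀ e, ¬ G.IsBridge e) {k : ℕ} (hk : G.edgeFinset.card = Fintype.card V + k)
    {Y : Finset (Sym2 V)} (hYE : Y ⊆ G.edgeFinset) :
    Module.finrank K (flowSpace K (G.edgeFinset \ Y)) = k ↔ Y.Nonempty ∧ ∀ e ∈ Y, ∀ f ∈ Y,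
      flowSpace K (G.edgeFinset \ {e}) = flowSpace K (G.edgeFinset \ {f}) := by
  have hsingle : ∀ e ∈ Y, Module.finrank K (flowSpace K (G.edgeFinset \ {e})) = k := by
    intro e he
    have := finrank_flowSpace_sdiff_singleton (K := K) hconn (hYE he) (hbridgeless e)
    omega
  constructor
  · intro hrank
    have heq : ∀ e ∈ Y, flowSpace K (G.edgeFinset \ Y) = flowSpace K (G.edgeFinset \ {e}) :=
      fun e he => Submodule.eq_of_le_of_finrank_eq (flowSpace_mono
        (Finset.sdiff_subset_sdiff subset_rfl (Finset.singleton_subset_iff.2 he)))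
        (hrank.trans (hsingle e he).symm)
    refine ⟨Finset.nonempty_iff_ne_empty.2 ?_, fun e he f hf => (heq e he).symm.trans (heq f hf)⟩
    rintro rfl
    have := finrank_flowSpace_edgeFinset (K := K) hconn
    rw [Finset.sdiff_empty] at hrank
    omega
  · rintro ⟨⟨e, he⟩, hconst⟩
    rw [flowSpace_sdiff_eq_of_constant he (hconst e he), hsingle e he]

-- Only the sets `Y` of deleted edges that lie in one class contribute to this coefficient.
open Classical in
lemma coeff_flowPoly_eq_neg_card_image {V : Type} [Fintype V] {G : SimpleGraph V}
    [Fintype G.edgeSet] (K : Type*) [Field K] [CharP K 2] (hconn : G.Connected)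
    (hbridgeless : ∀ e, ¬ G.IsBridge e) {k : ℕ} (hk : G.edgeFinset.card = Fintype.card V + k) :
    (flowPoly G).coeff k =
      -(G.edgeFinset.image fun e => flowSpace K (G.edgeFinset \ {e})).card := by
  rw [← sum_powerset_filter_constant_neg_one_pow, flowPoly_eq_sum_flowSpace G K, finsetSum_coeff,
    Finset.sum_filter]
  refine Finset.sum_congr rfl fun Y hY => ?_
  simp only [coeff_smul, coeff_X_pow, smul_eq_mul, mul_ite, mul_one, mul_zero,
    ← finrank_flowSpace_sdiff_eq_iff (K := K) hconn hbridgeless hk (Finset.mem_powerset.1 hY),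
    eq_comm (a := k)]

end Coefficient

section CutClass

lemma sum_product_self_eq_zero {V R : Type*} [Ring R] [CharP R 2] {φ : Sym2 V → R}
    (hφ : ∀ v, φ s(v, v) = 0) (S : Finset V) : ∑ p ∈ S ×ˢ S, φ s(p.1, p.2) = 0 := by
  refine Finset.sum_involution (f := fun p : V × V => φ s(p.1, p.2)) (fun p _ => p.swap)
    (fun p _ => ?_) (fun p _ hp heq => hp ?_) (fun p hp => by simpa [and_comm] using hp)
    fun p _ => p.swap_swap
  · rw [Prod.fst_swap, Prod.snd_swap, Sym2.eq_swap, CharTwo.add_self_eq_zero]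
  · rw [show p.1 = p.2 from congrArg Prod.snd heq, hφ]

variable {V : Type*} [Fintype V] [DecidableEq V] {G : SimpleGraph V} [DecidableRel G.Adj]
  {K : Type*} [Field K] [CharP K 2] {S : Finset V} {e f : Sym2 V}

lemma sum_edgeCut_eq_zero {φ : Sym2 V → K} (hφ : φ ∈ flowSpace K G.edgeFinset) (S : Finset V) :
    ∑ e ∈ edgeCut G S, φ e = 0 := by
  have hnonadj : ∀ u v, ¬ G.Adj u v → φ s(u, v) = 0 := fun u v huv =>
    hφ.1 _ (mt G.mem_edgeFinset.1 huv)
  have hinner : ∑ p ∈ S ×ˢ S, φ s(p.1, p.2) = 0 :=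
    sum_product_self_eq_zero (fun v => hnonadj v v G.irrefl) S
  have hcut : ∑ e ∈ edgeCut G S, φ e = ∑ p ∈ S ×ˢ Sᶜ, φ s(p.1, p.2) := by
    rw [edgeCut, Finset.sum_image mk_injOn_interedges_compl, SimpleGraph.interedges_def]
    exact Finset.sum_filter_of_ne fun p _ => not_imp_comm.1 (hnonadj _ _)
  calc ∑ e ∈ edgeCut G S, φ e
      = ∑ p ∈ S ×ˢ Sᶜ, φ s(p.1, p.2) + ∑ p ∈ S ×ˢ S, φ s(p.1, p.2) := by
        rw [hcut, hinner, add_zero]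
    _ = ∑ u ∈ S, ∑ w, φ s(u, w) := by
        simp only [Finset.sum_product, ← Finset.sum_add_distrib, Finset.sum_compl_add_sum]
    _ = 0 := Finset.sum_eq_zero fun u _ => hφ.2 u

lemma flowSpace_sdiff_singleton_eq_of_edgeCut_eq_pair (hef : e ≠ f) (hS : edgeCut G S = {e, f}) :
    flowSpace K (G.edgeFinset \ {e}) = flowSpace K (G.edgeFinset \ {f}) := by
  have he : e ∈ G.edgeFinset := edgeCut_subset_edgeFinset (S := S) (by simp [hS])
  have hf : f ∈ G.edgeFinset := edgeCut_subset_edgeFinset (S := S) (by simp [hS])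
  have hmem : ∀ g ∈ G.edgeFinset, ∀ φ : Sym2 V → K,
      φ ∈ flowSpace K (G.edgeFinset \ {g}) ↔ φ ∈ flowSpace K G.edgeFinset ∧ φ g = 0 := by
    intro g hg φ
    rw [mem_flowSpace_iff_of_subset Finset.sdiff_subset]
    refine and_congr_right fun _ => ⟨fun h => h g hg (by simp), fun h g' hg' hne => ?_⟩
    rwa [show g' = g by simpa [hg'] using hne]
  ext φ
  rw [hmem e he, hmem f hf]
  refine and_congr_right fun hφ => ?_
  have hsum := sum_edgeCut_eq_zero hφ S
  rw [hS, Finset.sum_pair hef, CharTwo.add_eq_zero] at hsum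
  rw [hsum]

lemma exists_edgeCut_eq_pair (hconn : G.Connected) (hbridgeless : ∀ e, ¬ G.IsBridge e)
    (he : e ∈ G.edgeFinset) (hf : f ∈ G.edgeFinset) (hef : e ≠ f)
    (hflow : flowSpace K (G.edgeFinset \ {e}) = flowSpace K (G.edgeFinset \ {f})) :
    ∃ S, edgeCut G S = {e, f} := by
  have hpair := finrank_flowSpace_sdiff_add_card (K := K) (Finset.insert_subset he
    (Finset.singleton_subset_iff.2 hf))
  rw [flowSpace_sdiff_eq_of_constant (Finset.mem_insert_self e {f}) (by simp [hflow]),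
    Finset.card_pair hef] at hpair
  have hsingle := finrank_flowSpace_sdiff_singleton (K := K) hconn he (hbridgeless e)
  have hdisconn : ¬ (G.deleteEdges ({e, f} : Finset (Sym2 V))).Preconnected := by
    intro hpre
    have := card_connectedComponent_eq_one_iff.2
      ((G.deleteEdges _).connected_iff.2 ⟨hpre, hconn.nonempty⟩)
    omega
  simp only [SimpleGraph.Preconnected, not_forall] at hdisconn
  obtain ⟨u, v, huv⟩ := hdisconn
  classical
  refine ⟨({w | (G.deleteEdges ({e, f} : Finset (Sym2 V))).Reachable u w} : Finset V),
    Finset.eq_of_subset_of_card_le ?_ (Finset.card_le_two.trans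
      (two_le_card_edgeCut hconn hbridgeless ⟨u, by simp⟩ ⟨v, by simpa using huv⟩))⟩
  rintro ⟨a, b⟩ hab
  obtain ⟨hadj, hside⟩ := mk_mem_edgeCut.1 hab
  by_contra hne
  have hab' : (G.deleteEdges ({e, f} : Finset (Sym2 V))).Adj a b :=
    SimpleGraph.deleteEdges_adj.2 ⟨hadj, hne⟩
  rw [Finset.mem_filter_univ, Finset.mem_filter_univ] at hside
  exact hside ⟨fun h => h.trans hab'.reachable, fun h => h.trans hab'.symm.reachable⟩

end CutClass

section RegularDegree

variable {V : Type*} [Fintype V] [DecidableEq V] {G : SimpleGraph V} [DecidableRel G.Adj]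
  {S : Finset V} {d : ℕ}

lemma card_interedges_self_add_card_edgeCut (hreg : G.IsRegularOfDegree d) (S : Finset V) :
    (G.interedges S S).card + (edgeCut G S).card = d * S.card := by
  have hdegree : ∀ v, ({w | G.Adj v w} : Finset V).card = d := by
    intro v
    rw [← SimpleGraph.neighborFinset_eq_filter, SimpleGraph.card_neighborFinset_eq_degree,
      hreg.degree_eq]
  simp only [card_edgeCut, SimpleGraph.interedges_def, Finset.card_filter, Finset.sum_product,
    ← Finset.sum_add_distrib, Finset.sum_add_sum_compl]
  simp only [← Finset.card_filter, hdegree, Finset.sum_const, smul_eq_mul, mul_comm]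

lemma card_edgeCut_singleton (hreg : G.IsRegularOfDegree d) (v : V) :
    (edgeCut G {v}).card = d := by
  have hcount := card_interedges_self_add_card_edgeCut hreg {v}
  simpa [SimpleGraph.interedges_def, Finset.filter_singleton] using hcount

omit [Fintype V] [DecidableEq V] in
lemma even_card_interedges_self (S : Finset V) : Even (G.interedges S S).card := by
  rw [even_iff_two_dvd, ← ZMod.natCast_eq_zero_iff, SimpleGraph.interedges_def,
    Finset.card_filter, Nat.cast_sum]
  exact (Finset.sum_congr rfl fun p _ => by simp).trans (sum_product_self_eq_zero (R := ZMod 2)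
    (φ := fun e => if e ∈ G.edgeSet then 1 else 0) (by simp) S)

omit [Fintype V] [DecidableEq V] in
lemma interedges_self_subset_offDiag : G.interedges S S ⊆ S.offDiag := by
  rintro ⟨u, v⟩ h
  rw [SimpleGraph.mk_mem_interedges_iff] at h
  exact Finset.mem_offDiag.2 ⟨h.1, h.2.1, h.2.2.ne⟩

lemma even_card_of_card_edgeCut_eq_two (hcubic : G.IsRegularOfDegree 3)
    (hS : (edgeCut G S).card = 2) : Even S.card := by
  have hcount := card_interedges_self_add_card_edgeCut hcubic S
  have heven := even_card_interedges_self (G := G) S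
  grind

lemma four_le_card_of_card_edgeCut_eq_two (hcubic : G.IsRegularOfDegree 3)
    (hS : (edgeCut G S).card = 2) : 4 ≤ S.card := by
  have hcount := card_interedges_self_add_card_edgeCut hcubic S
  have hle := Finset.card_le_card (interedges_self_subset_offDiag (G := G) (S := S))
  rw [Finset.offDiag_card] at hle
  by_contra! hlt
  interval_cases S.card <;> omega

end RegularDegree

section Laminar

variable {α : Type*} [DecidableEq α] {L : Finset (Finset α)} {P Q : Finset α}

variable (L) in
/-- A family of sets is laminar if any two of its members are disjoint or nested. -/
def IsLaminar : Prop :=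
  ∀ P ∈ L, ∀ Q ∈ L, Disjoint P Q ∨ P ⊆ Q ∨ Q ⊆ P

variable (L) in
/-- The elements of `Q` that lie in no smaller member of the family `L`. In a laminar family these
parts are disjoint, and each member is the union of the parts of the members it contains. -/
def ownPart (Q : Finset α) : Finset α :=
  {x ∈ Q | ∀ P ∈ L, P ⊂ Q → x ∉ P}

lemma mem_ownPart {x : α} : x ∈ ownPart L Q ↔ x ∈ Q ∧ ∀ P ∈ L, P ⊂ Q → x ∉ P :=
  Finset.mem_filter

lemma pairwiseDisjoint_ownPart (hL : IsLaminar L) :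
    (L : Set (Finset α)).PairwiseDisjoint (ownPart L) := by
  refine fun P hP Q hQ hPQ => Finset.disjoint_left.2 fun x hxP hxQ => ?_
  rw [mem_ownPart] at hxP hxQ
  rcases hL P hP Q hQ with h | h | h
  · exact Finset.disjoint_left.1 h hxP.1 hxQ.1
  · exact hxQ.2 P hP (h.ssubset_of_ne hPQ) hxP.1
  · exact hxP.2 Q hQ (h.ssubset_of_ne hPQ.symm) hxQ.1

lemma biUnion_ownPart (hQ : Q ∈ L) : ({P ∈ L | P ⊆ Q}).biUnion (ownPart L) = Q := by
  ext x
  simp only [Finset.mem_biUnion, Finset.mem_filter, mem_ownPart]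
  refine ⟨fun ⟨_, ⟨_, hPQ⟩, hx, _⟩ => hPQ hx, fun hx => ?_⟩
  obtain ⟨P, hP⟩ := ({P ∈ L | P ⊆ Q ∧ x ∈ P} : Finset (Finset α)).exists_minimal
    ⟨Q, by simp [hQ, hx]⟩
  simp only [Finset.mem_filter] at hP
  exact ⟨P, ⟨hP.prop.1, hP.prop.2.1⟩, hP.prop.2.2, fun R hR hRP hxR =>
    hP.not_lt ⟨hR, hRP.subset.trans hP.prop.2.1, hxR⟩ hRP⟩

lemma card_eq_sum_card_ownPart (hL : IsLaminar L) (hQ : Q ∈ L) :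
    Q.card = ∑ P ∈ L with P ⊆ Q, (ownPart L P).card := by
  conv_lhs => rw [← biUnion_ownPart hQ]
  exact Finset.card_biUnion
    ((pairwiseDisjoint_ownPart hL).subset (Finset.coe_subset.2 (L.filter_subset _)))

lemma even_card_ownPart (hL : IsLaminar L) (heven : ∀ Q ∈ L, Even Q.card) (hQ : Q ∈ L) :
    Even (ownPart L Q).card := by
  induction Q using Finset.strongInduction with | _ Q ih =>
  have hsum := card_eq_sum_card_ownPart hL hQ
  have hrest : Even (∑ P ∈ ({P ∈ L | P ⊆ Q} : Finset _).erase Q, (ownPart L P).card) := by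
    refine Finset.even_sum _ fun P hP => ?_
    rw [Finset.mem_erase, Finset.mem_filter] at hP
    exact ih P (hP.2.2.ssubset_of_ne hP.1) hP.2.1
  rw [← Finset.add_sum_erase (L.filter (· ⊆ Q)) _ (by simp [hQ] : Q ∈ L.filter (· ⊆ Q))] at hsum
  exact (Nat.even_add.1 (hsum ▸ heven Q hQ)).2 hrest

lemma ownPart_eq_self (hQ : ∀ P ∈ L, ¬ P ⊂ Q) : ownPart L Q = Q :=
  Finset.filter_true_of_mem fun _ _ P hP hPQ => absurd hPQ (hQ P hP)

lemma two_mul_card_add_two_le_card (hL : IsLaminar L) (hfour : ∀ Q ∈ L, 4 ≤ Q.card)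
    (hown : ∀ Q ∈ L, 2 ≤ (ownPart L Q).card) (hQ : Q ∈ L) :
    2 * ({P ∈ L | P ⊆ Q} : Finset _).card + 2 ≤ Q.card := by
  obtain ⟨M, hM⟩ := ({P ∈ L | P ⊆ Q} : Finset (Finset α)).exists_minimal ⟨Q, by simp [hQ]⟩
  have hMQ := Finset.mem_filter.1 hM.prop
  have hownM : ownPart L M = M := ownPart_eq_self fun P hP hPM =>
    hM.not_lt (Finset.mem_filter.2 ⟨hP, hPM.subset.trans hMQ.2⟩) hPM
  have hrest := Finset.card_nsmul_le_sum (({P ∈ L | P ⊆ Q} : Finset _).erase M)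
    (fun P => (ownPart L P).card) 2 fun _ hP =>
      hown _ (Finset.mem_filter.1 (Finset.mem_of_mem_erase hP)).1
  rw [card_eq_sum_card_ownPart hL hQ, ← Finset.add_sum_erase _ _ hM.prop, hownM]
  have := hfour M hMQ.1
  have := Finset.card_erase_add_one hM.prop
  rw [smul_eq_mul] at hrest
  omega

lemma sum_card_ownPart_add_two_mul_card_le (hL : IsLaminar L)
    (hown : ∀ Q ∈ L, 2 ≤ (ownPart L Q).card) {D : Finset (Finset α)} (hD : D ⊆ L) :
    ∑ P ∈ D, (ownPart L P).card + 2 * (L \ D).card ≤ (L.biUnion id).card := by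
  calc ∑ P ∈ D, (ownPart L P).card + 2 * (L \ D).card
      ≤ ∑ P ∈ D, (ownPart L P).card + ∑ P ∈ L \ D, (ownPart L P).card := by
        rw [mul_comm, ← smul_eq_mul]
        gcongr
        exact Finset.card_nsmul_le_sum _ _ _ fun P hP => hown P (Finset.mem_sdiff.1 hP).1
    _ = (L.biUnion (ownPart L)).card := by
        rw [Finset.card_biUnion (pairwiseDisjoint_ownPart hL), add_comm, Finset.sum_sdiff hD]
    _ ≤ (L.biUnion id).card :=
        Finset.card_le_card (Finset.biUnion_mono fun P _ => Finset.filter_subset _ _)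

lemma card_eq_of_card_biUnion_le (hL : IsLaminar L) (hfour : ∀ Q ∈ L, 4 ≤ Q.card)
    (hown : ∀ Q ∈ L, 2 ≤ (ownPart L Q).card) (hcard : (L.biUnion id).card ≤ 2 * L.card + 2)
    (hQ : Q ∈ L) : Q.card = 2 * ({P ∈ L | P ⊆ Q} : Finset _).card + 2 := by
  have hlower := two_mul_card_add_two_le_card hL hfour hown hQ
  have hupper := sum_card_ownPart_add_two_mul_card_le hL hown (L.filter_subset (· ⊆ Q))
  rw [← card_eq_sum_card_ownPart hL hQ] at hupper
  have := Finset.card_sdiff_add_card_eq_card (L.filter_subset (· ⊆ Q))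
  omega

lemma subset_or_subset_of_card_biUnion_le (hL : IsLaminar L) (hfour : ∀ Q ∈ L, 4 ≤ Q.card)
    (hown : ∀ Q ∈ L, 2 ≤ (ownPart L Q).card) (hcard : (L.biUnion id).card ≤ 2 * L.card + 2)
    (hP : P ∈ L) (hQ : Q ∈ L) : P ⊆ Q ∨ Q ⊆ P := by
  refine (hL P hP Q hQ).resolve_left fun hPQ => ?_
  have hdisj : Disjoint ({R ∈ L | R ⊆ P} : Finset _) {R ∈ L | R ⊆ Q} := by
    refine Finset.disjoint_filter.2 fun R hR hRP hRQ => ?_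
    have hempty : R = ∅ := Finset.subset_empty.1 (hPQ hRP hRQ)
    simpa [hempty] using hfour R hR
  have hsub : ({R ∈ L | R ⊆ P} ∪ {R ∈ L | R ⊆ Q} : Finset _) ⊆ L :=
    Finset.union_subset (L.filter_subset _) (L.filter_subset _)
  have htotal := sum_card_ownPart_add_two_mul_card_le hL hown hsub
  rw [Finset.sum_union hdisj, ← card_eq_sum_card_ownPart hL hP,
    ← card_eq_sum_card_ownPart hL hQ] at htotal
  have := two_mul_card_add_two_le_card hL hfour hown hP
  have := two_mul_card_add_two_le_card hL hfour hown hQ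
  have := Finset.card_sdiff_add_card_eq_card hsub
  have := Finset.card_union_of_disjoint hdisj
  omega

lemma exists_chain_of_card_biUnion_le (hL : IsLaminar L) (hfour : ∀ Q ∈ L, 4 ≤ Q.card)
    (hown : ∀ Q ∈ L, 2 ≤ (ownPart L Q).card) (hcard : (L.biUnion id).card ≤ 2 * L.card + 2) :
    ∃ Q : ℕ → Finset α, (∀ i < L.card, Q i ∈ L ∧ (Q i).card = 2 * i + 4) ∧
      ∀ i, i + 1 < L.card → Q i ⊆ Q (i + 1) := by
  let rank (Q : Finset α) : ℕ := ({P ∈ L | P ⊆ Q} : Finset _).card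
  have hrank : ∀ Q ∈ L, Q.card = 2 * rank Q + 2 := fun Q hQ =>
    card_eq_of_card_biUnion_le hL hfour hown hcard hQ
  have hchain : ∀ P ∈ L, ∀ Q ∈ L, rank P ≤ rank Q → P ⊆ Q := by
    intro P hP Q hQ hPQ
    rcases subset_or_subset_of_card_biUnion_le hL hfour hown hcard hP hQ with h | h
    · exact h
    · exact (Finset.eq_of_subset_of_card_le h (by rw [hrank P hP, hrank Q hQ]; omega)).ge
  have hinj : Set.InjOn rank L := fun P hP Q hQ h =>
    (hchain P hP Q hQ h.le).antisymm (hchain Q hQ P hP h.ge)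
  have himage : L.image rank = Finset.Icc 1 L.card := by
    refine Finset.eq_of_subset_of_card_le (Finset.image_subset_iff.2 fun Q hQ => ?_) ?_
    · exact Finset.mem_Icc.2 ⟨Finset.card_pos.2 ⟨Q, by simp [hQ]⟩,
        Finset.card_le_card (L.filter_subset _)⟩
    · rw [Finset.card_image_of_injOn hinj, Nat.card_Icc, Nat.add_sub_cancel]
  have hexists : ∀ i, ∃ Q, i < L.card → Q ∈ L ∧ rank Q = i + 1 := by
    intro i
    by_cases hi : i < L.card
    · obtain ⟨Q, hQ⟩ := Finset.mem_image.1 (himage ▸ Finset.mem_Icc.2 ⟨by omega, hi⟩ :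
        i + 1 ∈ L.image rank)
      exact ⟨Q, fun _ => hQ⟩
    · exact ⟨∅, fun h => absurd h hi⟩
  choose Q hQ using hexists
  refine ⟨Q, fun i hi => ⟨(hQ i hi).1, ?_⟩, fun i hi => ?_⟩
  · rw [hrank _ (hQ i hi).1, (hQ i hi).2]
    omega
  · obtain ⟨hmem, hrk⟩ := hQ i (by omega)
    exact hchain _ hmem _ (hQ _ hi).1 (by rw [hrk, (hQ _ hi).2]; omega)

end Laminar

section CutChain

variable {V : Type*} [Fintype V] [DecidableEq V] {G : SimpleGraph V} [DecidableRel G.Adj]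
  {A S T : Finset V}

lemma disjoint_edgeCut_of_crossing (hconn : G.Connected) (hbridgeless : ∀ e, ¬ G.IsBridge e)
    (hS : (edgeCut G S).card = 2) (hT : (edgeCut G T).card = 2) (hinter : (S ∩ T).Nonempty)
    (hST : (S \ T).Nonempty) (hTS : (T \ S).Nonempty) (hcompl : (S ∪ T)ᶜ.Nonempty) :
    Disjoint (edgeCut G S) (edgeCut G T) ∧ (edgeCut G (S ∩ T)).card = 2 ∧
      (edgeCut G (S \ T)).card = 2 ∧ (edgeCut G (T \ S)).card = 2 := by
  obtain ⟨x, hx⟩ := hcompl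
  simp only [Finset.mem_compl, Finset.mem_union, not_or] at hx
  have htwo : ∀ R ⊆ S ∪ T, R.Nonempty → 2 ≤ (edgeCut G R).card := fun R hR hne =>
    two_le_card_edgeCut hconn hbridgeless hne
      ⟨x, Finset.mem_compl.2 fun h => (Finset.mem_union.1 (hR h)).elim hx.1 hx.2⟩
  have := htwo _ (Finset.inter_subset_left.trans Finset.subset_union_left) hinter
  have := htwo _ (Finset.sdiff_subset.trans Finset.subset_union_left) hST
  have := htwo _ (Finset.sdiff_subset.trans Finset.subset_union_right) hTS
  have := htwo _ subset_rfl (hinter.mono (Finset.inter_subset_left.trans Finset.subset_union_left))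
  have hatoms := card_edgeCut_atoms (G := G) (S := S) (T := T)
  have hunion := Finset.card_union_add_card_inter (edgeCut G S) (edgeCut G T)
  rw [Finset.disjoint_iff_inter_eq_empty, ← Finset.card_eq_zero]
  omega

lemma edgeCut_inter_subset : edgeCut G (S ∩ T) ⊆ edgeCut G S ∪ edgeCut G T := by
  rintro ⟨u, v⟩ h
  refine Finset.mem_union.2 (?_ : s(u, v) ∈ _ ∨ s(u, v) ∈ _)
  have h' := mk_mem_edgeCut.1 h
  simp only [mk_mem_edgeCut, Finset.mem_inter] at h' ⊢
  tauto

lemma exists_mem_edgeCut_inter (hcard : (edgeCut G T).card ≤ (edgeCut G (S ∩ T)).card)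
    (hne : (edgeCut G (T \ S)).Nonempty) : ∃ e ∈ edgeCut G (S ∩ T), e ∈ edgeCut G S := by
  by_contra! hdisj
  have hsub : edgeCut G (S ∩ T) ⊆ edgeCut G T := fun e he =>
    (Finset.mem_union.1 (edgeCut_inter_subset he)).resolve_left (hdisj e he)
  have hsymm : T \ S = symmDiff (S ∩ T) T := by
    ext x
    simp only [Finset.mem_sdiff, Finset.mem_symmDiff, Finset.mem_inter]
    tauto
  rw [hsymm, edgeCut_symmDiff, Finset.eq_of_subset_of_card_le hsub hcard, symmDiff_self] at hne
  exact Finset.not_nonempty_empty hne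

lemma exists_edgeCut_inter_eq_pair (hconn : G.Connected) (hbridgeless : ∀ e, ¬ G.IsBridge e)
    (hS : (edgeCut G S).card = 2) (hT : (edgeCut G T).card = 2) (hinter : (S ∩ T).Nonempty)
    (hST : (S \ T).Nonempty) (hTS : (T \ S).Nonempty) (hcompl : (S ∪ T)ᶜ.Nonempty) :
    ∃ e ∈ edgeCut G S, ∃ f ∈ edgeCut G T, e ≠ f ∧ edgeCut G (S ∩ T) = {e, f} := by
  obtain ⟨hdisj, hcard, hcard', hcard''⟩ :=
    disjoint_edgeCut_of_crossing hconn hbridgeless hS hT hinter hST hTS hcompl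
  obtain ⟨e, he, heS⟩ := exists_mem_edgeCut_inter (hT.trans hcard.symm).le
    (Finset.card_pos.1 (by omega))
  obtain ⟨f, hf, hfT⟩ := exists_mem_edgeCut_inter (S := T) (T := S)
    (by rw [Finset.inter_comm, hS, hcard]) (Finset.card_pos.1 (by rw [hcard']; exact two_pos))
  rw [Finset.inter_comm] at hf
  have hef : e ≠ f := Finset.disjoint_iff_ne.1 hdisj e heS f hfT
  refine ⟨e, heS, f, hfT, hef, (Finset.eq_of_subset_of_card_le ?_ ?_).symm⟩
  · exact Finset.insert_subset he (Finset.singleton_subset_iff.2 hf)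
  · rw [hcard, Finset.card_pair hef]

lemma disjoint_of_card_edgeCut_eq_two_of_minimal (hconn : G.Connected)
    (hbridgeless : ∀ e, ¬ G.IsBridge e) (hA : (edgeCut G A).card = 2)
    (hmin : ∀ S, (edgeCut G S).card = 2 → A.card ≤ S.card) (hS : (edgeCut G S).card = 2)
    (hAS : ¬ A ⊆ S) : Disjoint A S := by
  by_contra hmeet
  rw [Finset.not_disjoint_iff_nonempty_inter] at hmeet
  have hSA : (S \ A).Nonempty := by
    refine Finset.sdiff_nonempty.2 fun h => hAS ?_
    exact (Finset.eq_of_subset_of_card_le h (hmin S hS)).ge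
  have hcompl : (A ∪ S)ᶜ.Nonempty := by
    by_contra hempty
    rw [Finset.not_nonempty_iff_eq_empty, Finset.compl_eq_empty_iff] at hempty
    have hsub : Sᶜ ⊆ A := fun x hx =>
      (Finset.mem_union.1 (hempty ▸ Finset.mem_univ x)).resolve_right (Finset.mem_compl.1 hx)
    have heq := Finset.eq_of_subset_of_card_le hsub (hmin Sᶜ (by rwa [edgeCut_compl]))
    rw [← heq, Finset.inter_comm, Finset.inter_compl] at hmeet
    exact Finset.not_nonempty_empty hmeet
  have hdiff := hmin _ (disjoint_edgeCut_of_crossing hconn hbridgeless hA hS hmeet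
    (Finset.sdiff_nonempty.2 hAS) hSA hcompl).2.2.1
  have := Finset.card_sdiff_add_card_inter A S
  have := hmeet.card_pos
  omega

lemma ownPart_nonempty_of_mem_edgeCut {L : Finset (Finset V)} {e : Sym2 V}
    (he : e ∈ edgeCut G S) (hunique : ∀ P ∈ L, e ∈ edgeCut G P → P = S) :
    (ownPart L S).Nonempty := by
  obtain ⟨u, v, rfl, hu, hv⟩ : ∃ u v, e = s(u, v) ∧ u ∈ S ∧ v ∉ S := by
    obtain ⟨⟨u, v⟩, huv, rfl⟩ := Finset.mem_image.1 he
    rw [SimpleGraph.mk_mem_interedges_iff, Finset.mem_compl] at huv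
    exact ⟨u, v, rfl, huv.1, huv.2.1⟩
  refine ⟨u, mem_ownPart.2 ⟨hu, fun P hP hPS huP => hPS.ne (hunique P hP ?_)⟩⟩
  exact mk_mem_edgeCut.2 ⟨(mk_mem_edgeCut.1 he).1, fun h => hv (hPS.subset (h.1 huP))⟩

variable (K : Type*) [Field K] [CharP K 2] {L : Finset (Finset V)} {v : V} {k s : ℕ}

open Classical in
lemma exists_representatives_flowSpace_sdiff_singleton (hconn : G.Connected)
    (hbridgeless : ∀ e, ¬ G.IsBridge e) (v : V) :
    ∃ R ⊆ G.edgeFinset,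
      R.card = (G.edgeFinset.image fun e => flowSpace K (G.edgeFinset \ {e})).card ∧
      Set.InjOn (fun e => flowSpace K (G.edgeFinset \ {e})) R ∧
      ∀ e ∈ G.edgeFinset \ R, ∃ r ∈ R, ∃ S, edgeCut G S = {e, r} ∧ v ∉ S := by
  set c := fun e => flowSpace K (G.edgeFinset \ {e})
  obtain ⟨R, hRE, hcR, himage⟩ := Finset.exists_subset_injOn_image_eq_of_surjOn
    (f := c) (G.edgeFinset : Set (Sym2 V)) (G.edgeFinset.image c)
    (by rw [Finset.coe_image]; exact Set.surjOn_image _ _)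
  rw [Finset.coe_subset] at hRE
  refine ⟨R, hRE, by rw [← himage, Finset.card_image_of_injOn hcR], hcR, fun e he => ?_⟩
  rw [Finset.mem_sdiff] at he
  obtain ⟨r, hr, hcr⟩ := Finset.mem_image.1 (himage ▸ Finset.mem_image_of_mem c he.1)
  obtain ⟨S, hS⟩ := exists_edgeCut_eq_pair hconn hbridgeless he.1 (hRE hr)
    (fun h => he.2 (h ▸ hr)) hcr.symm
  by_cases hv : v ∈ S
  · exact ⟨r, hr, Sᶜ, edgeCut_compl.trans hS, by simpa using hv⟩
  · exact ⟨r, hr, S, hS, hv⟩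

open Classical in
lemma exists_edgeCut_family (hconn : G.Connected) (hbridgeless : ∀ e, ¬ G.IsBridge e)
    (hclasses : G.edgeFinset.card =
      (G.edgeFinset.image fun e => flowSpace K (G.edgeFinset \ {e})).card + k) (v : V) :
    ∃ L : Finset (Finset V), L.card = k ∧ (∀ S ∈ L, (edgeCut G S).card = 2 ∧ v ∉ S) ∧
      (∀ S ∈ L, ∃ e ∈ edgeCut G S, ∀ T ∈ L, e ∈ edgeCut G T → T = S) ∧
      ∀ S ∈ L, ∀ T ∈ L, ∀ e ∈ edgeCut G S, ∀ f ∈ edgeCut G T,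
        flowSpace K (G.edgeFinset \ {e}) = flowSpace K (G.edgeFinset \ {f}) →
          ¬ Disjoint (edgeCut G S) (edgeCut G T) := by
  obtain ⟨R, hRE, hRcard, hcR, hrep⟩ :=
    exists_representatives_flowSpace_sdiff_singleton K hconn hbridgeless v
  set c := fun e => flowSpace K (G.edgeFinset \ {e})
  choose! r hr Q hQ hvQ using hrep
  have hne : ∀ e ∈ G.edgeFinset \ R, ∀ f ∈ G.edgeFinset \ R, f ≠ r e := fun e he f hf h =>
    (Finset.mem_sdiff.1 hf).2 (h ▸ hr e he)
  have hself : ∀ e ∈ G.edgeFinset \ R, e ∈ edgeCut G (Q e) := fun e he => by simp [hQ e he]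
  have hunique : ∀ e ∈ G.edgeFinset \ R, ∀ f ∈ G.edgeFinset \ R, e ∈ edgeCut G (Q f) → e = f :=
    fun e he f hf h => by simpa [hQ f hf, hne f hf e he] using h
  have hc : ∀ e ∈ G.edgeFinset \ R, ∀ f ∈ edgeCut G (Q e), c f = c (r e) := by
    intro e he f hf
    have := flowSpace_sdiff_singleton_eq_of_edgeCut_eq_pair (K := K) (hne e he e he) (hQ e he)
    rw [hQ e he, Finset.mem_insert, Finset.mem_singleton] at hf
    rcases hf with rfl | rfl
    exacts [this, rfl]
  have hinj : Set.InjOn Q (G.edgeFinset \ R : Finset (Sym2 V)) := fun e he f hf h =>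
    hunique e he f hf (h ▸ hself e he)
  refine ⟨(G.edgeFinset \ R).image Q, ?_, ?_, ?_, ?_⟩
  · rw [Finset.card_image_of_injOn hinj, Finset.card_sdiff_of_subset hRE, hclasses, ← hRcard,
      Nat.add_sub_cancel_left]
  all_goals simp only [Finset.forall_mem_image]
  · exact fun e he => ⟨by rw [hQ e he, Finset.card_pair (hne e he e he)], hvQ e he⟩
  · exact fun e he => ⟨e, hself e he, fun f hf h => by rw [hunique e he f hf h]⟩
  · intro e he f hf e' he' f' hf' h
    have hreq : r e = r f :=
      hcR (hr e he) (hr f hf) ((hc e he e' he').symm.trans (h.trans (hc f hf f' hf')))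
    exact Finset.not_disjoint_iff.2 ⟨r e, by simp [hQ e he], by simp [hQ f hf, hreq]⟩

lemma isLaminar_of_edgeCut_family (hconn : G.Connected) (hbridgeless : ∀ e, ¬ G.IsBridge e)
    (hL : ∀ S ∈ L, (edgeCut G S).card = 2 ∧ v ∉ S)
    (hmeet : ∀ S ∈ L, ∀ T ∈ L, ∀ e ∈ edgeCut G S, ∀ f ∈ edgeCut G T,
      flowSpace K (G.edgeFinset \ {e}) = flowSpace K (G.edgeFinset \ {f}) →
        ¬ Disjoint (edgeCut G S) (edgeCut G T)) : IsLaminar L := by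
  intro S hS T hT
  by_contra! hcross
  obtain ⟨hinter, hST, hTS⟩ := hcross
  rw [Finset.not_disjoint_iff_nonempty_inter] at hinter
  rw [← Finset.sdiff_nonempty] at hST hTS
  have hcompl : (S ∪ T)ᶜ.Nonempty := ⟨v, by simp [(hL S hS).2, (hL T hT).2]⟩
  obtain ⟨e, he, f, hf, hef, hcut⟩ := exists_edgeCut_inter_eq_pair hconn hbridgeless (hL S hS).1
    (hL T hT).1 hinter hST hTS hcompl
  exact hmeet S hS T hT e he f hf (flowSpace_sdiff_singleton_eq_of_edgeCut_eq_pair hef hcut)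
    (disjoint_edgeCut_of_crossing hconn hbridgeless (hL S hS).1 (hL T hT).1 hinter hST hTS hcompl).1

open Classical in
lemma exists_chain_card_edgeCut_eq_two (hconn : G.Connected) (hbridgeless : ∀ e, ¬ G.IsBridge e)
    (hcubic : G.IsRegularOfDegree 3) (hclasses : G.edgeFinset.card =
      (G.edgeFinset.image fun e => flowSpace K (G.edgeFinset \ {e})).card + (s + 1))
    (hcard : Fintype.card V ≤ 2 * s + 8) :
    ∃ Q : ℕ → Finset V, (∀ i ≤ s, (edgeCut G (Q i)).card = 2 ∧ (Q i).card = 2 * i + 4) ∧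
      ∀ i < s, Q i ⊆ Q (i + 1) := by
  have hexists : ∃ S : Finset V, (edgeCut G S).card = 2 := by
    obtain ⟨v⟩ := hconn.nonempty
    obtain ⟨L, hLcard, hL, -⟩ := exists_edgeCut_family K hconn hbridgeless hclasses v
    obtain ⟨S, hS⟩ := Finset.card_pos.1 (by omega : 0 < L.card)
    exact ⟨S, (hL S hS).1⟩
  obtain ⟨A, hA, hmin⟩ := Finset.exists_min_image {S : Finset V | (edgeCut G S).card = 2}
    Finset.card (by simpa [Finset.Nonempty] using hexists)
  simp only [Finset.mem_filter_univ] at hA hmin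
  have hAfour := four_le_card_of_card_edgeCut_eq_two hcubic hA
  obtain ⟨v, hv⟩ := Finset.card_pos.1 (by omega : 0 < A.card)
  obtain ⟨L, hLcard, hL, hprivate, hmeet⟩ :=
    exists_edgeCut_family K hconn hbridgeless hclasses v
  have hlaminar := isLaminar_of_edgeCut_family K hconn hbridgeless hL hmeet
  have hown : ∀ S ∈ L, 2 ≤ (ownPart L S).card := by
    intro S hS
    obtain ⟨e, he, hunique⟩ := hprivate S hS
    have := even_card_ownPart hlaminar
      (fun T hT => even_card_of_card_edgeCut_eq_two hcubic (hL T hT).1) hS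
    have := (ownPart_nonempty_of_mem_edgeCut he hunique).card_pos
    grind
  have hdisj : Disjoint A (L.biUnion id) := (Finset.disjoint_biUnion_right _ _ _).2 fun S hS =>
    disjoint_of_card_edgeCut_eq_two_of_minimal hconn hbridgeless hA hmin (hL S hS).1
      fun h => (hL S hS).2 (h hv)
  have hunion := Finset.card_le_univ (A ∪ L.biUnion id)
  rw [Finset.card_union_of_disjoint hdisj] at hunion
  obtain ⟨Q, hQ, hchain⟩ := exists_chain_of_card_biUnion_le hlaminar
    (fun S hS => four_le_card_of_card_edgeCut_eq_two hcubic (hL S hS).1) hown (by omega)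
  exact ⟨Q, fun i hi => ⟨(hL _ (hQ i (by omega)).1).1, (hQ i (by omega)).2⟩,
    fun i hi => hchain i (by omega)⟩

end CutChain

section TwoCut

variable {V : Type*}

/-- The graph `G` has exactly two edges leaving `Q`. They share no end, and the `j`-th one leads
from `c j ∈ Q` to `r j ∉ Q`. -/
structure IsTwoCut (G : SimpleGraph V) (Q : Finset V) (c r : Fin 2 → V) : Prop where
  mem : ∀ j, c j ∈ Q
  notMem : ∀ j, r j ∉ Q
  injective_inner : c.Injective
  injective_outer : r.Injective
  adj_iff : ∀ v ∈ Q, ∀ w ∉ Q, G.Adj v w ↔ ∃ j, v = c j ∧ w = r j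

variable {G : SimpleGraph V} {Q Q' : Finset V} {c r : Fin 2 → V}

lemma IsTwoCut.adj (h : IsTwoCut G Q c r) (j : Fin 2) : G.Adj (c j) (r j) :=
  (h.adj_iff _ (h.mem j) _ (h.notMem j)).2 ⟨j, rfl, rfl⟩

lemma IsTwoCut.exists_reindex (h : IsTwoCut G Q c r) {d : Fin 2 → V} (hd : d.Injective)
    (hcd : ∀ j, ∃ k, c j = d k) : ∃ r', IsTwoCut G Q d r' := by
  choose σ hσ using hcd
  have hσ_inj : σ.Injective := fun i j hij => h.injective_inner (by rw [hσ, hσ, hij])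
  let e := Equiv.ofBijective σ (Finite.injective_iff_bijective.1 hσ_inj)
  have he : ∀ k, c (e.symm k) = d k := fun k => (hσ _).trans (congrArg d (e.apply_symm_apply k))
  refine ⟨r ∘ e.symm, fun k => he k ▸ h.mem _, fun k => h.notMem _, hd,
    h.injective_outer.comp e.symm.injective, fun v hv w hw => (h.adj_iff v hv w hw).trans ?_⟩
  rw [← e.symm.exists_congr_right]
  simp only [he, Function.comp_apply]

variable [Fintype V] [DecidableEq V]

lemma IsTwoCut.compl (h : IsTwoCut G Q c r) : IsTwoCut G Qᶜ r c where
  mem j := Finset.mem_compl.2 (h.notMem j)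
  notMem j := by simpa using h.mem j
  injective_inner := h.injective_outer
  injective_outer := h.injective_inner
  adj_iff v hv w hw := by
    rw [Finset.mem_compl] at hv
    rw [Finset.mem_compl, not_not] at hw
    simp only [G.adj_comm v w, h.adj_iff w hw v hv, and_comm]

variable [DecidableRel G.Adj]

lemma not_edgeCut_subset_edgeCut_singleton (hconn : G.Connected)
    (hbridgeless : ∀ e, ¬ G.IsBridge e) (hcubic : G.IsRegularOfDegree 3)
    (hQ : (edgeCut G Q).card = 2) (v : V) : ¬ edgeCut G Q ⊆ edgeCut G {v} := by
  intro hsub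
  have hv := card_edgeCut_singleton hcubic v
  have hcard : (edgeCut G (symmDiff Q {v})).card = 1 := by
    rw [edgeCut_symmDiff, symmDiff_of_le hsub, Finset.card_sdiff_of_subset hsub]
    omega
  have hne : (symmDiff Q {v}).Nonempty := by
    rw [Finset.nonempty_iff_ne_empty, ← Finset.bot_eq_empty, Ne, symmDiff_eq_bot]
    rintro rfl
    omega
  have hne' : (symmDiff Q {v})ᶜ.Nonempty := by
    rw [Finset.nonempty_iff_ne_empty, Ne, Finset.compl_eq_empty_iff, ← Finset.top_eq_univ,
      symmDiff_eq_top]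
    intro hcompl
    rw [hcompl.symm.eq_compl, edgeCut_compl] at hv
    omega
  have := two_le_card_edgeCut hconn hbridgeless hne hne'
  omega

lemma exists_isTwoCut (hconn : G.Connected) (hbridgeless : ∀ e, ¬ G.IsBridge e)
    (hcubic : G.IsRegularOfDegree 3) (hQ : (edgeCut G Q).card = 2) :
    ∃ c r, IsTwoCut G Q c r := by
  have hinter := hQ
  rw [card_edgeCut, Finset.card_eq_two] at hinter
  obtain ⟨⟨c₀, r₀⟩, ⟨c₁, r₁⟩, -, hinter⟩ := hinter
  have hadj : ∀ v w, v ∈ Q ∧ w ∉ Q ∧ G.Adj v w ↔ (v = c₀ ∧ w = r₀) ∨ (v = c₁ ∧ w = r₁) := by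
    intro v w
    rw [← Finset.mem_compl, ← SimpleGraph.mk_mem_interedges_iff, hinter]
    simp
  obtain ⟨hc₀, hr₀, hcr₀⟩ := (hadj c₀ r₀).2 (.inl ⟨rfl, rfl⟩)
  obtain ⟨hc₁, hr₁, hcr₁⟩ := (hadj c₁ r₁).2 (.inr ⟨rfl, rfl⟩)
  have hcut : edgeCut G Q = {s(c₀, r₀), s(c₁, r₁)} := by
    rw [edgeCut, hinter, Finset.image_insert, Finset.image_singleton]
  have hshared := not_edgeCut_subset_edgeCut_singleton hconn hbridgeless hcubic hQ
  simp only [hcut, Finset.insert_subset_iff, Finset.singleton_subset_iff, mk_mem_edgeCut,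
    Finset.mem_singleton, hcr₀, hcr₁, true_and] at hshared
  have hc : c₀ ≠ c₁ := by
    rintro rfl
    exact hshared c₀ (by simp [hcr₀.ne', hcr₁.ne'])
  have hr : r₀ ≠ r₁ := by
    rintro rfl
    exact hshared r₀ (by simp [hcr₀.ne, hcr₁.ne])
  refine ⟨![c₀, c₁], ![r₀, r₁], ?_, ?_, ?_, ?_, fun v hv w hw => ?_⟩
  · exact Fin.forall_fin_two.2 ⟨hc₀, hc₁⟩
  · exact Fin.forall_fin_two.2 ⟨hr₀, hr₁⟩
  · exact injective_pair_iff_ne.2 hc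
  · exact injective_pair_iff_ne.2 hr
  · simpa [hv, hw] using hadj v w

omit [DecidableEq V] in
-- A vertex of `Q` off the two edges has its three neighbours among the other three of `Q`.
lemma IsTwoCut.exists_of_card_eq_four (hcubic : G.IsRegularOfDegree 3) (h : IsTwoCut G Q c r)
    (hQ : Q.card = 4) :
    ∃ a : Fin 2 → V, (∀ v ∈ Q, (∃ j, v = c j) ∨ ∃ j, v = a j) ∧ G.Adj (a 0) (a 1) ∧
      ∀ j k, G.Adj (a j) (c k) := by
  classical
  have hinner : ∀ v ∈ Q, (∀ j, v ≠ c j) → ∀ w ∈ Q, w ≠ v → G.Adj v w := by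
    intro v hv hvc w hw hwv
    have hsub : G.neighborFinset v ⊆ Q.erase v := by
      intro x hx
      rw [SimpleGraph.mem_neighborFinset] at hx
      refine Finset.mem_erase.2 ⟨hx.ne', by_contra fun hxQ => ?_⟩
      obtain ⟨j, hj, -⟩ := (h.adj_iff v hv x hxQ).1 hx
      exact hvc j hj
    have heq := Finset.eq_of_subset_of_card_le hsub (by
      rw [SimpleGraph.card_neighborFinset_eq_degree, hcubic.degree_eq, Finset.card_erase_of_mem hv,
        hQ])
    rw [← SimpleGraph.mem_neighborFinset, heq]
    exact Finset.mem_erase.2 ⟨hwv, hw⟩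
  have hsub : Finset.univ.image c ⊆ Q := Finset.image_subset_iff.2 fun j _ => h.mem j
  obtain ⟨a₀, a₁, hne, ha⟩ := Finset.card_eq_two.1 (show (Q \ Finset.univ.image c).card = 2 by
    rw [Finset.card_sdiff_of_subset hsub, Finset.card_image_of_injective _ h.injective_inner, hQ,
      Finset.card_fin])
  have hmem : ∀ v, (v ∈ Q ∧ ∀ j, v ≠ c j) ↔ v = a₀ ∨ v = a₁ := by
    intro v
    rw [← Finset.mem_singleton (a := a₁), ← Finset.mem_insert, ← ha]
    simp [eq_comm]
  have ha₀ := (hmem a₀).2 (.inl rfl)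
  have ha₁ := (hmem a₁).2 (.inr rfl)
  refine ⟨![a₀, a₁], fun v hv => ?_, hinner a₀ ha₀.1 ha₀.2 a₁ ha₁.1 hne.symm, ?_⟩
  · by_cases hvc : ∃ j, v = c j
    · exact .inl hvc
    · exact .inr (by simpa using (hmem v).1 ⟨hv, not_exists.1 hvc⟩)
  · exact Fin.forall_fin_two.2 ⟨fun k => hinner a₀ ha₀.1 ha₀.2 _ (h.mem k) (ha₀.2 k).symm,
      fun k => hinner a₁ ha₁.1 ha₁.2 _ (h.mem k) (ha₁.2 k).symm⟩

lemma disjoint_edgeCut_of_card_eq_add_two (hcubic : G.IsRegularOfDegree 3)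
    (hQ : (edgeCut G Q).card = 2) (hQ' : (edgeCut G Q').card = 2) (hsub : Q ⊆ Q')
    (hcard : Q'.card = Q.card + 2) :
    Disjoint (edgeCut G Q) (edgeCut G Q') ∧ (G.interedges (Q' \ Q) (Q' \ Q)).card = 2 := by
  have hD : (Q' \ Q).card = 2 := by
    rw [Finset.card_sdiff_of_subset hsub]
    omega
  have hcount := card_interedges_self_add_card_edgeCut hcubic (Q' \ Q)
  have hinner := Finset.card_le_card (interedges_self_subset_offDiag (G := G) (S := Q' \ Q))
  have hcut : edgeCut G (Q' \ Q) = edgeCut G Q \ edgeCut G Q' ∪ edgeCut G Q' \ edgeCut G Q := by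
    rw [← symmDiff_of_le hsub, edgeCut_symmDiff]
    rfl
  have houter := Finset.card_union_le (edgeCut G Q \ edgeCut G Q') (edgeCut G Q' \ edgeCut G Q)
  rw [← hcut] at houter
  rw [Finset.offDiag_card, hD] at hinner
  have := Finset.card_sdiff_add_card_inter (edgeCut G Q) (edgeCut G Q')
  have := Finset.card_sdiff_add_card_inter (edgeCut G Q') (edgeCut G Q)
  rw [Finset.disjoint_iff_inter_eq_empty, ← Finset.card_eq_zero]
  omega

lemma IsTwoCut.exists_of_card_eq_add_two (hconn : G.Connected) (hbridgeless : ∀ e, ¬ G.IsBridge e)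
    (hcubic : G.IsRegularOfDegree 3) (h : IsTwoCut G Q c r) (hQ : (edgeCut G Q).card = 2)
    (hQ' : (edgeCut G Q').card = 2) (hsub : Q ⊆ Q') (hcard : Q'.card = Q.card + 2) :
    (∀ v ∈ Q', v ∈ Q ∨ ∃ j, v = r j) ∧ G.Adj (r 0) (r 1) ∧ ∃ r', IsTwoCut G Q' r r' := by
  obtain ⟨hdisj, hinner⟩ := disjoint_edgeCut_of_card_eq_add_two hcubic hQ hQ' hsub hcard
  have hadj : ∀ v ∈ Q, ∀ w ∉ Q, G.Adj v w → w ∈ Q' := by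
    intro v hv w hw hvw
    by_contra hwQ'
    exact Finset.disjoint_left.1 hdisj (mk_mem_edgeCut.2 ⟨hvw, by tauto⟩)
      (mk_mem_edgeCut.2 ⟨hvw, by simp [hsub hv, hwQ']⟩)
  have hD : Finset.univ.image r = Q' \ Q := by
    refine Finset.eq_of_subset_of_card_le (Finset.image_subset_iff.2 fun j _ => ?_) ?_
    · exact Finset.mem_sdiff.2 ⟨hadj _ (h.mem j) _ (h.notMem j) (h.adj j), h.notMem j⟩
    · rw [Finset.card_sdiff_of_subset hsub, Finset.card_image_of_injective _ h.injective_outer,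
        Finset.card_fin]
      omega
  have hmem : ∀ v ∈ Q', v ∈ Q ∨ ∃ j, v = r j := by
    intro v hv
    by_cases hvQ : v ∈ Q
    · exact .inl hvQ
    · have := hD ▸ Finset.mem_sdiff.2 ⟨hv, hvQ⟩
      simpa [eq_comm] using Or.inr this
  refine ⟨hmem, ?_, ?_⟩
  · obtain ⟨⟨v, w⟩, hvw⟩ := Finset.card_pos.1 (hinner ▸ two_pos)
    rw [SimpleGraph.mk_mem_interedges_iff, ← hD] at hvw
    obtain ⟨hv, hw, hvw⟩ := hvw
    simp only [Finset.mem_image, Finset.mem_univ, true_and, Fin.exists_fin_two] at hv hw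
    rcases hv with rfl | rfl <;> rcases hw with rfl | rfl
    exacts [absurd hvw G.irrefl, hvw, hvw.symm, absurd hvw G.irrefl]
  · obtain ⟨c', r', h'⟩ := exists_isTwoCut hconn hbridgeless hcubic hQ'
    refine h'.exists_reindex h.injective_outer fun j =>
      (hmem _ (h'.mem j)).resolve_left fun hj => ?_
    exact h'.notMem j (hadj _ hj _ (fun hr => h'.notMem j (hsub hr)) (h'.adj j))

lemma exists_ladder (hconn : G.Connected) (hbridgeless : ∀ e, ¬ G.IsBridge e)
    (hcubic : G.IsRegularOfDegree 3) {s : ℕ} {Q : ℕ → Finset V}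
    (hQ : ∀ i ≤ s, (edgeCut G (Q i)).card = 2 ∧ (Q i).card = 2 * i + 4)
    (hchain : ∀ i < s, Q i ⊆ Q (i + 1)) :
    ∃ c : ℕ → Fin 2 → V, (∀ i ≤ s, IsTwoCut G (Q i) (c i) (c (i + 1))) ∧
      ∀ i < s, (∀ v ∈ Q (i + 1), v ∈ Q i ∨ ∃ j, v = c (i + 1) j) ∧
        G.Adj (c (i + 1) 0) (c (i + 1) 1) := by
  induction s with
  | zero =>
    obtain ⟨c, r, h⟩ := exists_isTwoCut hconn hbridgeless hcubic (hQ 0 le_rfl).1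
    refine ⟨fun i => if i = 0 then c else r, fun i hi => ?_, fun i hi => absurd hi i.not_lt_zero⟩
    obtain rfl := Nat.le_zero.1 hi
    exact h
  | succ s ih =>
    obtain ⟨c, hcut, hcol⟩ := ih (fun i hi => hQ i (by omega)) fun i hi => hchain i (by omega)
    obtain ⟨hmem, hadj, r, hr⟩ := (hcut s le_rfl).exists_of_card_eq_add_two hconn hbridgeless
      hcubic (hQ s (by omega)).1 (hQ (s + 1) le_rfl).1 (hchain s (by omega))
      (by rw [(hQ s (by omega)).2, (hQ (s + 1) le_rfl).2]; omega)
    have hupdate : ∀ i ≤ s + 1, Function.update c (s + 2) r i = c i := fun i hi =>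
      Function.update_of_ne (by omega) _ _
    refine ⟨Function.update c (s + 2) r, fun i hi => ?_, fun i hi => ?_⟩
    · rcases Nat.le_succ_iff.1 hi with hi | rfl
      · rw [hupdate i (by omega), hupdate (i + 1) (by omega)]
        exact hcut i hi
      · rwa [hupdate _ le_rfl, Function.update_self]
    · rw [hupdate (i + 1) (by omega)]
      rcases Nat.lt_succ_iff_lt_or_eq.1 hi with hi | rfl
      exacts [hcol i hi, ⟨hmem, hadj⟩]

end TwoCut

section GStarStructure

lemma sym2_mk_one_sub {α : Type*} (f : Fin 2 → α) (j : Fin 2) :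
    s(f j, f (1 - j)) = s(f 0, f 1) := by
  fin_cases j
  exacts [rfl, Sym2.eq_swap]

namespace gStar

variable {s : ℕ}

/-- The `j`-th vertex of the `i`-th column of `G*`: column `0` is `a₁, a₂`, column `i` is
`u_i, v_i` for `1 ≤ i ≤ s`, and column `s + 1` (and, as a junk value, every later one) is
`b₁, b₂`. -/
def column (s i : ℕ) (j : Fin 2) : GStarV s :=
  if i = 0 then .inl (Fin.castAdd 2 j)
  else if h : i - 1 < s then .inr (.inr (⟨i - 1, h⟩, j))
  else .inr (.inl (Fin.castAdd 2 j))

/-- The vertices `a₃, a₄` of `G*`. -/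
def innerA (s : ℕ) (j : Fin 2) : GStarV s := .inl (Fin.natAdd 2 j)

/-- The vertices `b₃, b₄` of `G*`. -/
def innerB (s : ℕ) (j : Fin 2) : GStarV s := .inr (.inl (Fin.natAdd 2 j))

lemma column_succ {i : ℕ} (hi : i < s) (j : Fin 2) :
    column s (i + 1) j = .inr (.inr (⟨i, hi⟩, j)) := by
  simp [column, hi]

lemma column_last (j : Fin 2) : column s (s + 1) j = .inr (.inl (Fin.castAdd 2 j)) := by
  simp [column]

lemma vertex_cases {p : GStarV s → Prop} (hA : ∀ j, p (innerA s j)) (hB : ∀ j, p (innerB s j))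
    (hfirst : ∀ j, p (column s 0 j)) (hlast : ∀ j, p (column s (s + 1) j))
    (hmid : ∀ i < s, ∀ j, p (column s (i + 1) j)) (v : GStarV s) : p v := by
  simp only [column_last] at hlast
  rcases v with v | v | ⟨i, j⟩
  · exact Fin.addCases (m := 2) (n := 2) (motive := fun v => p (.inl v)) hfirst hA v
  · exact Fin.addCases (m := 2) (n := 2) (motive := fun v => p (.inr (.inl v))) hlast hB v
  · simpa only [column_succ i.2] using hmid i i.2 j

lemma column_injective {i i' : ℕ} {j j' : Fin 2} (hi : i ≤ s + 1) (hi' : i' ≤ s + 1)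
    (h : column s i j = column s i' j') : i = i' ∧ j = j' := by
  unfold column at h
  split_ifs at h <;> simp [Fin.ext_iff] at h ⊢ <;> omega

lemma column_ne_column {i i' : ℕ} (hi : i ≤ s + 1) (hi' : i' ≤ s + 1) (h : i ≠ i')
    (j j' : Fin 2) : column s i j ≠ column s i' j' :=
  fun heq => h (column_injective hi hi' heq).1

lemma column_zero_ne_one {i : ℕ} (hi : i ≤ s + 1) : column s i 0 ≠ column s i 1 :=
  fun heq => absurd (column_injective hi hi heq).2 (by decide)

lemma column_ne_innerA (i : ℕ) (j k : Fin 2) : column s i j ≠ innerA s k := by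
  unfold column innerA
  split_ifs <;> simp [Fin.ext_iff]; omega

lemma column_ne_innerB (i : ℕ) (j k : Fin 2) : column s i j ≠ innerB s k := by
  unfold column innerB
  split_ifs <;> simp [Fin.ext_iff]; omega

lemma innerA_zero_ne_one : innerA s 0 ≠ innerA s 1 := by
  simp [innerA]

lemma innerB_zero_ne_one : innerB s 0 ≠ innerB s 1 := by
  simp [innerB]

lemma adj_iff (v w : GStarV s) :
    (gStar s).Adj v w ↔ v ≠ w ∧ (gStarRel s v w ∨ gStarRel s w v) :=
  SimpleGraph.fromRel_adj _ v w

lemma adj_innerA_iff (j : Fin 2) (w : GStarV s) : (gStar s).Adj (innerA s j) w ↔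
    w = column s 0 0 ∨ w = column s 0 1 ∨ w = innerA s (1 - j) := by
  rw [adj_iff]
  rcases w with w | w | ⟨i, k⟩ <;> fin_cases j <;> try fin_cases w
  all_goals grind [column, innerA, gStarRel]

lemma adj_innerB_iff (j : Fin 2) (w : GStarV s) : (gStar s).Adj (innerB s j) w ↔
    w = column s (s + 1) 0 ∨ w = column s (s + 1) 1 ∨ w = innerB s (1 - j) := by
  rw [adj_iff, column_last, column_last]
  rcases w with w | w | ⟨i, k⟩ <;> fin_cases j <;> try fin_cases w
  all_goals grind [innerB, gStarRel]

lemma adj_column_zero_iff (j : Fin 2) (w : GStarV s) : (gStar s).Adj (column s 0 j) w ↔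
    w = innerA s 0 ∨ w = innerA s 1 ∨ w = column s 1 j := by
  rw [adj_iff]
  rcases w with w | w | ⟨i, k⟩ <;> fin_cases j <;> grind [column, innerA, gStarRel]

lemma adj_column_last_iff (j : Fin 2) (w : GStarV s) : (gStar s).Adj (column s (s + 1) j) w ↔
    w = innerB s 0 ∨ w = innerB s 1 ∨ w = column s s j := by
  rw [adj_iff]
  rcases w with w | w | ⟨i, k⟩ <;> fin_cases j <;> grind [column, innerB, gStarRel]

lemma adj_column_succ_iff {i : ℕ} (hi : i < s) (j : Fin 2) (w : GStarV s) :
    (gStar s).Adj (column s (i + 1) j) w ↔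
      w = column s i j ∨ w = column s (i + 2) j ∨ w = column s (i + 1) (1 - j) := by
  rw [adj_iff, column_succ hi, column_succ hi]
  simp only [column]
  rcases w with w | w | ⟨i', k⟩
  · fin_cases j <;> fin_cases w <;> simp [gStarRel] <;> split_ifs <;> simp
  · fin_cases j <;> fin_cases w <;> simp [gStarRel] <;> split_ifs <;> simp <;> omega
  · have hi' := i'.2
    fin_cases j <;> fin_cases k <;> simp [gStarRel, Fin.ext_iff] <;> split_ifs <;>
      simp [Fin.ext_iff] <;> omega

lemma forall_mem_edgeSet_iff {p : Sym2 (GStarV s) → Prop} :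
    (∀ e ∈ (gStar s).edgeSet, p e) ↔
      ((∀ i ≤ s, ∀ j, p s(column s i j, column s (i + 1) j)) ∧
        ∀ i < s, p s(column s (i + 1) 0, column s (i + 1) 1)) ∧
      ((∀ j k, p s(innerA s j, column s 0 k)) ∧ p s(innerA s 0, innerA s 1)) ∧
      (∀ j k, p s(innerB s j, column s (s + 1) k)) ∧ p s(innerB s 0, innerB s 1) := by
  simp only [Sym2.forall, SimpleGraph.mem_edgeSet]
  refine ⟨fun h => ⟨⟨fun i hi j => h _ _ ?_, fun i hi => h _ _ ?_⟩,
    ⟨fun j => Fin.forall_fin_two.2 ⟨h _ _ ?_, h _ _ ?_⟩, h _ _ ?_⟩,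
    fun j => Fin.forall_fin_two.2 ⟨h _ _ ?_, h _ _ ?_⟩, h _ _ ?_⟩, ?_⟩
  · rcases i with _ | i
    exacts [(adj_column_zero_iff j _).2 (.inr (.inr rfl)),
      (adj_column_succ_iff hi j _).2 (.inr (.inl rfl))]
  · exact (adj_column_succ_iff hi 0 _).2 (.inr (.inr rfl))
  · exact (adj_innerA_iff j _).2 (.inl rfl)
  · exact (adj_innerA_iff j _).2 (.inr (.inl rfl))
  · exact (adj_innerA_iff 0 _).2 (.inr (.inr rfl))
  · exact (adj_innerB_iff j _).2 (.inl rfl)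
  · exact (adj_innerB_iff j _).2 (.inr (.inl rfl))
  · exact (adj_innerB_iff 0 _).2 (.inr (.inr rfl))
  · rintro ⟨⟨hrail, hrung⟩, ⟨hA, hA'⟩, hB, hB'⟩ v
    refine vertex_cases (p := fun v => ∀ w, (gStar s).Adj v w → p s(v, w)) (fun j w => ?_)
      (fun j w => ?_) (fun j w => ?_) (fun j w => ?_) (fun i hi j w => ?_) v
    · rw [adj_innerA_iff]
      rintro (rfl | rfl | rfl)
      exacts [hA _ _, hA _ _, sym2_mk_one_sub (innerA s) j ▸ hA']
    · rw [adj_innerB_iff]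
      rintro (rfl | rfl | rfl)
      exacts [hB _ _, hB _ _, sym2_mk_one_sub (innerB s) j ▸ hB']
    · rw [adj_column_zero_iff]
      rintro (rfl | rfl | rfl)
      exacts [Sym2.eq_swap ▸ hA _ _, Sym2.eq_swap ▸ hA _ _, hrail 0 s.zero_le j]
    · rw [adj_column_last_iff]
      rintro (rfl | rfl | rfl)
      exacts [Sym2.eq_swap ▸ hB _ _, Sym2.eq_swap ▸ hB _ _, Sym2.eq_swap ▸ hrail s le_rfl j]
    · rw [adj_column_succ_iff hi]
      rintro (rfl | rfl | rfl)
      exacts [Sym2.eq_swap ▸ hrail i hi.le j, hrail (i + 1) hi j,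
        sym2_mk_one_sub (column s (i + 1)) j ▸ hrung i hi]

lemma connected (s : ℕ) : (gStar s).Connected := by
  obtain ⟨⟨hrail, -⟩, ⟨hA, -⟩, hB, -⟩ :=
    forall_mem_edgeSet_iff.1 fun e (he : e ∈ (gStar s).edgeSet) => he
  have hcolumn : ∀ i ≤ s + 1, ∀ j, (gStar s).Reachable (innerA s 0) (column s i j) := by
    intro i
    induction i with
    | zero => exact fun _ j => SimpleGraph.Adj.reachable (hA 0 j)
    | succ i ih =>
      exact fun hi j => (ih (by omega) j).trans (SimpleGraph.Adj.reachable (hrail i (by omega) j))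
  refine SimpleGraph.connected_iff_exists_forall_reachable _ |>.2 ⟨innerA s 0, vertex_cases ?_ ?_
    (hcolumn 0 (by omega)) (hcolumn _ le_rfl) fun i hi => hcolumn _ (by omega)⟩
  · exact fun j => (hcolumn 0 (by omega) 0).trans (SimpleGraph.Adj.reachable (hA j 0)).symm
  · exact fun j => (hcolumn _ le_rfl 0).trans (SimpleGraph.Adj.reachable (hB j 0)).symm

lemma isRegularOfDegree [DecidableRel (gStar s).Adj] : (gStar s).IsRegularOfDegree 3 := by
  have hdegree {v x y z : GStarV s} (h : ∀ w, (gStar s).Adj v w ↔ w = x ∨ w = y ∨ w = z)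
      (hxy : x ≠ y) (hxz : x ≠ z) (hyz : y ≠ z) : (gStar s).degree v = 3 := by
    rw [← SimpleGraph.card_neighborFinset_eq_degree, Finset.card_eq_three]
    exact ⟨x, y, z, hxy, hxz, hyz, by ext w; simp [h]⟩
  refine vertex_cases (fun j => hdegree (adj_innerA_iff j) ?_ ?_ ?_)
    (fun j => hdegree (adj_innerB_iff j) ?_ ?_ ?_)
    (fun j => hdegree (adj_column_zero_iff j) ?_ ?_ ?_)
    (fun j => hdegree (adj_column_last_iff j) ?_ ?_ ?_)
    (fun i hi j => hdegree (adj_column_succ_iff hi j) ?_ ?_ ?_)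
  exacts [column_zero_ne_one (by omega), column_ne_innerA _ _ _, column_ne_innerA _ _ _,
    column_zero_ne_one le_rfl, column_ne_innerB _ _ _, column_ne_innerB _ _ _,
    innerA_zero_ne_one, (column_ne_innerA _ _ _).symm, (column_ne_innerA _ _ _).symm,
    innerB_zero_ne_one, (column_ne_innerB _ _ _).symm, (column_ne_innerB _ _ _).symm,
    column_ne_column (by omega) (by omega) (by omega) _ _,
    column_ne_column (by omega) (by omega) (by omega) _ _,
    column_ne_column (by omega) (by omega) (by omega) _ _]

lemma card_vertices (s : ℕ) : Fintype.card (GStarV s) = 2 * s + 8 := by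
  simp only [Fintype.card_sum, Fintype.card_fin, Fintype.card_prod]
  omega

/-- The map on the vertices of `G*` sending column `i` to `c i`, the inner vertices `a₃, a₄` to
`a 0, a 1` and `b₃, b₄` to `b 0, b 1`. -/
def lift {V : Type} (c : ℕ → Fin 2 → V) (a b : Fin 2 → V) : GStarV s → V :=
  Sum.elim (Fin.append (c 0) a)
    (Sum.elim (Fin.append (c (s + 1)) b) fun p => c (p.1 + 1) p.2)

variable {V : Type} (c : ℕ → Fin 2 → V) (a b : Fin 2 → V) (j : Fin 2)

lemma lift_innerA : lift c a b (innerA s j) = a j :=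
  Fin.append_right (c 0) a j

lemma lift_innerB : lift c a b (innerB s j) = b j :=
  Fin.append_right (c (s + 1)) b j

lemma lift_column {i : ℕ} (hi : i ≤ s + 1) : lift c a b (column s i j) = c i j := by
  rcases i with _ | i
  · exact Fin.append_left (c 0) a j
  · rcases (Nat.le_of_succ_le_succ hi).lt_or_eq with hi | rfl
    · rw [column_succ hi]; rfl
    · rw [column_last]
      exact Fin.append_left (c (i + 1)) b j

variable {c a b}

lemma lift_surjective {Q : ℕ → Finset V} (hA : ∀ v ∈ Q 0, (∃ j, v = c 0 j) ∨ ∃ j, v = a j)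
    (hcolumn : ∀ i < s, ∀ v ∈ Q (i + 1), v ∈ Q i ∨ ∃ j, v = c (i + 1) j)
    (hB : ∀ v ∉ Q s, (∃ j, v = c (s + 1) j) ∨ ∃ j, v = b j) :
    Function.Surjective (lift (s := s) c a b) := by
  have hrange : ∀ i ≤ s, ∀ v ∈ Q i, v ∈ Set.range (lift (s := s) c a b) := by
    intro i
    induction i with
    | zero =>
      intro _ v hv
      rcases hA v hv with ⟨j, rfl⟩ | ⟨j, rfl⟩
      exacts [⟨_, lift_column c a b j (by omega)⟩, ⟨_, lift_innerA c a b j⟩]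
    | succ i ih =>
      intro hi v hv
      rcases hcolumn i hi v hv with hv | ⟨j, rfl⟩
      exacts [ih (by omega) v hv, ⟨_, lift_column c a b j (by omega)⟩]
  intro v
  by_cases hv : v ∈ Q s
  · exact hrange s le_rfl v hv
  · rcases hB v hv with ⟨j, rfl⟩ | ⟨j, rfl⟩
    exacts [⟨_, lift_column c a b j le_rfl⟩, ⟨_, lift_innerB c a b j⟩]

end gStar

lemma nonempty_iso_of_bijective_of_degree_le {V W : Type*} {G : SimpleGraph V} {H : SimpleGraph W}
    [G.LocallyFinite] [H.LocallyFinite] (f : G →g H) (hf : Function.Bijective f)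
    (hdegree : ∀ v, H.degree (f v) ≤ G.degree v) : Nonempty (G ≃g H) := by
  classical
  have himage (v : V) : (G.neighborFinset v).image f = H.neighborFinset (f v) := by
    refine Finset.eq_of_subset_of_card_le (Finset.image_subset_iff.2 fun w hw => ?_) ?_
    · exact (H.mem_neighborFinset _ _).2 (f.map_adj ((G.mem_neighborFinset v w).1 hw))
    · rw [Finset.card_image_of_injective _ hf.1]
      exact hdegree v
  refine ⟨Equiv.ofBijective f hf, fun {v w} => ?_⟩
  rw [Equiv.ofBijective_apply, Equiv.ofBijective_apply, ← SimpleGraph.mem_neighborFinset, ← himage,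
    hf.1.mem_finset_image, SimpleGraph.mem_neighborFinset]

variable {V : Type} [Fintype V] {G : SimpleGraph V} [DecidableRel G.Adj]

open Classical in
lemma nonempty_iso_gStar (K : Type*) [Field K] [CharP K 2] (hconn : G.Connected)
    (hbridgeless : ∀ e, ¬ G.IsBridge e) (hcubic : G.IsRegularOfDegree 3) {s : ℕ}
    (hcard : Fintype.card V = 2 * s + 8) (hclasses : G.edgeFinset.card =
      (G.edgeFinset.image fun e => flowSpace K (G.edgeFinset \ {e})).card + (s + 1)) :
    Nonempty (G ≃g gStar s) := by
  obtain ⟨Q, hQ, hchain⟩ :=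
    exists_chain_card_edgeCut_eq_two K hconn hbridgeless hcubic hclasses hcard.le
  obtain ⟨c, hcut, hcolumn⟩ := exists_ladder hconn hbridgeless hcubic hQ hchain
  obtain ⟨a, hmemA, haa, hac⟩ :=
    (hcut 0 s.zero_le).exists_of_card_eq_four hcubic (hQ 0 s.zero_le).2
  obtain ⟨b, hmemB, hbb, hbc⟩ := (hcut s le_rfl).compl.exists_of_card_eq_four hcubic (by
    rw [Finset.card_compl, (hQ s le_rfl).2, hcard]; omega)
  let f : gStar s →g G := ⟨gStar.lift c a b, fun {v w} hvw => by
    refine gStar.forall_mem_edgeSet_iff (p := fun e => e.map (gStar.lift c a b) ∈ G.edgeSet).2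
      ⟨⟨fun i hi j => ?_, fun i hi => ?_⟩, ⟨fun j k => ?_, ?_⟩, fun j k => ?_, ?_⟩ s(v, w) hvw
    all_goals simp (disch := omega) only [Sym2.map_mk, gStar.lift_column, gStar.lift_innerA,
      gStar.lift_innerB, SimpleGraph.mem_edgeSet]
    exacts [(hcut i hi).adj j, (hcolumn i hi).2, hac j k, haa, hbc j k, hbb]⟩
  have hsurj : Function.Surjective f := gStar.lift_surjective hmemA (fun i hi => (hcolumn i hi).1)
    fun v hv => hmemB v (Finset.mem_compl.2 hv)
  have hbij := (Fintype.bijective_iff_surjective_and_card f).2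
    ⟨hsurj, (gStar.card_vertices s).trans hcard.symm⟩
  obtain ⟨e⟩ := nonempty_iso_of_bijective_of_degree_le f hbij fun v => by
    rw [hcubic.degree_eq, gStar.isRegularOfDegree.degree_eq]
  exact ⟨e.symm⟩

end GStarStructure

section GStarFlow

lemma sum_eq_zero_of_adj_iff {V K : Type*} [Fintype V] [Field K] {G : SimpleGraph V}
    [DecidableRel G.Adj] {φ : Sym2 V → K} (hφ : φ ∈ flowSpace K G.edgeFinset) {v x y z : V}
    (hdegree : G.degree v = 3) (hadj : ∀ w, G.Adj v w ↔ w = x ∨ w = y ∨ w = z) :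
    φ s(v, x) + φ s(v, y) + φ s(v, z) = 0 := by
  classical
  have hnbr : G.neighborFinset v = {x, y, z} := by ext w; simp [hadj]
  have hcard : ({x, y, z} : Finset V).card = 3 := hnbr ▸ hdegree
  have hxy : x ≠ y := by rintro rfl; grind [Finset.card_le_two (a := x) (b := z)]
  have hxz : x ≠ z := by rintro rfl; grind [Finset.card_le_two (a := x) (b := y)]
  have hyz : y ≠ z := by rintro rfl; grind [Finset.card_le_two (a := x) (b := y)]
  rw [← hφ.2 v, ← Finset.sum_subset (Finset.subset_univ (G.neighborFinset v)), hnbr,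
    Finset.sum_insert (by simp [hxy, hxz]), Finset.sum_pair hyz, add_assoc]
  exact fun w _ hw => hφ.1 _ (by simpa using hw)

lemma natCard_subtype_prod_and {α β : Type*} [Finite α] [Finite β] {p : α → Prop}
    {q : α → β → Prop} {k : ℕ} (hq : ∀ a, p a → Nat.card {b // q a b} = k) :
    Nat.card {x : α × β // p x.1 ∧ q x.1 x.2} = Nat.card {a // p a} * k := by
  have e : {x : α × β // p x.1 ∧ q x.1 x.2} ≃ Σ a : {a // p a}, {b // q a b} :=
    ⟨fun x => ⟨⟨x.1.1, x.2.1⟩, ⟨x.1.2, x.2.2⟩⟩, fun x => ⟨(x.1, x.2), x.1.2, x.2.2⟩,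
      fun _ => rfl, fun _ => rfl⟩
  have := Fintype.ofFinite {a // p a}
  rw [Nat.card_congr e, Nat.card_sigma, Finset.sum_congr rfl fun a _ => hq a.1 a.2,
    Finset.sum_const, Finset.card_univ, Nat.card_eq_fintype_card, smul_eq_mul]

lemma natCard_subtype_notMem {α : Type*} [Finite α] (S : Finset α) :
    Nat.card {a // a ∉ S} = Nat.card α - S.card := by
  classical
  have := Fintype.ofFinite α
  rw [Nat.card_eq_fintype_card, Nat.card_eq_fintype_card, ← Finset.card_compl]
  exact Fintype.card_of_subtype _ fun _ => Finset.mem_compl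

/-- All edges of a ladder carry values satisfying `p`, if the `i`-th edges of both rails carry
`x i`; the rungs then carry the sums of successive values. -/
def LadderValues {K : Type*} [Add K] (p : K → Prop) {n : ℕ} (x : Fin (n + 1) → K) : Prop :=
  (∀ i, p (x i)) ∧ ∀ i : Fin n, p (x i.castSucc + x i.succ)

/-- All edges of a copy of `K₄` minus an edge carry values satisfying `p`, if the two edges at one
of the vertices of degree three towards those of degree two carry `a 0` and `a 1`, and an edge
carrying `u` leaves from each vertex of degree two. -/
def CapValues {K : Type*} [Add K] (p : K → Prop) (u : K) (a : Fin 2 → K) : Prop :=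
  ((∀ k, p (a k)) ∧ ∀ k, p (a k + u)) ∧ p (a 0 + a 1)

lemma ladderValues_cons {K : Type*} [Add K] {p : K → Prop} {n : ℕ} {a : K}
    {x : Fin (n + 1) → K} : LadderValues p (Fin.cons a x : Fin (n + 2) → K) ↔
      LadderValues p x ∧ p a ∧ p (a + x 0) := by
  simp only [LadderValues, Fin.forall_fin_succ (n := n + 1), Fin.cons_zero, Fin.cons_succ]
  rw [Fin.forall_fin_succ (P := fun i => p (_ + _))]
  simp only [Fin.castSucc_zero, Fin.cons_zero, Fin.cons_succ, ← Fin.succ_castSucc]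
  tauto

section Counting

variable {K : Type*} [Field K] [CharP K 2] [Finite K]

lemma natCard_ladderValues_ne_zero (n : ℕ) :
    Nat.card {x : Fin (n + 1) → K // LadderValues (· ≠ 0) x} =
      (Nat.card K - 1) * (Nat.card K - 2) ^ n := by
  classical
  induction n with
  | zero =>
    have e : {x : Fin 1 → K // LadderValues (· ≠ 0) x} ≃ {a : K // a ∉ ({0} : Finset K)} :=
      (Equiv.funUnique (Fin 1) K).subtypeEquiv fun x => by simp [LadderValues]
    rw [Nat.card_congr e, natCard_subtype_notMem, Finset.card_singleton, pow_zero, mul_one]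
  | succ n ih =>
    have e : {x : Fin (n + 2) → K // LadderValues (· ≠ 0) x} ≃
        {x : (Fin (n + 1) → K) × K // LadderValues (· ≠ 0) x.1 ∧
          x.2 ∉ ({0, x.1 0} : Finset K)} :=
      ((Equiv.prodComm _ _).trans (Fin.consEquiv fun _ => K)).symm.subtypeEquiv fun x => by
        refine Fin.consCases (fun a x => ?_) x
        simp [ladderValues_cons, CharTwo.add_eq_zero]
    rw [Nat.card_congr e, natCard_subtype_prod_and
      (q := fun (x : Fin (n + 1) → K) a => a ∉ ({0, x 0} : Finset K)) fun x hx => by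
        rw [natCard_subtype_notMem, Finset.card_pair (hx.1 0).symm], ih, pow_succ, mul_assoc]

lemma natCard_capValues_ne_zero {u : K} (hu : u ≠ 0) :
    Nat.card {a : Fin 2 → K // CapValues (· ≠ 0) u a} =
      (Nat.card K - 2) * (Nat.card K - 3) := by
  classical
  have e : {a : Fin 2 → K // CapValues (· ≠ 0) u a} ≃
      {x : K × K // x.1 ∉ ({0, u} : Finset K) ∧ x.2 ∉ ({x.1, 0, u} : Finset K)} :=
    (finTwoArrowEquiv K).subtypeEquiv fun a => by
      simp only [CapValues, ne_eq, Fin.forall_fin_two, CharTwo.add_eq_zero, Finset.mem_insert,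
        Finset.mem_singleton, finTwoArrowEquiv_apply]
      tauto
  rw [Nat.card_congr e, natCard_subtype_prod_and (p := fun a => a ∉ ({0, u} : Finset K))
    (q := fun a b => b ∉ ({a, 0, u} : Finset K)) fun a ha => by
      rw [natCard_subtype_notMem, Finset.card_insert_of_notMem ha, Finset.card_pair hu.symm],
    natCard_subtype_notMem, Finset.card_pair hu.symm]

end Counting

namespace gStar

variable {s : ℕ} [DecidableRel (gStar s).Adj] {K : Type*} [Field K] [CharP K 2]
  {φ : Sym2 (GStarV s) → K}

lemma flow_innerA (hφ : φ ∈ flowSpace K (gStar s).edgeFinset) (j : Fin 2) :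
    φ s(innerA s 0, innerA s 1) =
      φ s(innerA s j, column s 0 0) + φ s(innerA s j, column s 0 1) := by
  rw [← sym2_mk_one_sub (innerA s) j, eq_comm, ← CharTwo.add_eq_zero]
  exact sum_eq_zero_of_adj_iff hφ (isRegularOfDegree.degree_eq _) (adj_innerA_iff j)

lemma flow_innerB (hφ : φ ∈ flowSpace K (gStar s).edgeFinset) (j : Fin 2) :
    φ s(innerB s 0, innerB s 1) =
      φ s(innerB s j, column s (s + 1) 0) + φ s(innerB s j, column s (s + 1) 1) := by
  rw [← sym2_mk_one_sub (innerB s) j, eq_comm, ← CharTwo.add_eq_zero]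
  exact sum_eq_zero_of_adj_iff hφ (isRegularOfDegree.degree_eq _) (adj_innerB_iff j)

lemma flow_column_zero (hφ : φ ∈ flowSpace K (gStar s).edgeFinset) (j : Fin 2) :
    φ s(column s 0 j, column s 1 j) =
      φ s(innerA s 0, column s 0 j) + φ s(innerA s 1, column s 0 j) := by
  rw [eq_comm, ← CharTwo.add_eq_zero, Sym2.eq_swap, Sym2.eq_swap (a := innerA s 1)]
  exact sum_eq_zero_of_adj_iff hφ (isRegularOfDegree.degree_eq _) (adj_column_zero_iff j)

lemma flow_column_last (hφ : φ ∈ flowSpace K (gStar s).edgeFinset) (j : Fin 2) :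
    φ s(column s s j, column s (s + 1) j) =
      φ s(innerB s 0, column s (s + 1) j) + φ s(innerB s 1, column s (s + 1) j) := by
  rw [eq_comm, ← CharTwo.add_eq_zero, Sym2.eq_swap, Sym2.eq_swap (a := innerB s 1),
    Sym2.eq_swap (a := column s s j)]
  exact sum_eq_zero_of_adj_iff hφ (isRegularOfDegree.degree_eq _) (adj_column_last_iff j)

lemma flow_rung (hφ : φ ∈ flowSpace K (gStar s).edgeFinset) {i : ℕ} (hi : i < s) (j : Fin 2) :
    φ s(column s (i + 1) 0, column s (i + 1) 1) =
      φ s(column s i j, column s (i + 1) j) + φ s(column s (i + 1) j, column s (i + 2) j) := by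
  rw [← sym2_mk_one_sub (column s (i + 1)) j, eq_comm, ← CharTwo.add_eq_zero,
    Sym2.eq_swap (a := column s i j)]
  exact sum_eq_zero_of_adj_iff hφ (isRegularOfDegree.degree_eq _) (adj_column_succ_iff hi j)

lemma flow_rail (hφ : φ ∈ flowSpace K (gStar s).edgeFinset) {i : ℕ} (hi : i ≤ s) (j : Fin 2) :
    φ s(column s i j, column s (i + 1) j) = φ s(column s i 0, column s (i + 1) 0) := by
  suffices h : φ s(column s i 1, column s (i + 1) 1) = φ s(column s i 0, column s (i + 1) 0) by
    fin_cases j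
    exacts [rfl, h]
  induction i with
  | zero =>
    rw [flow_column_zero hφ, flow_column_zero hφ, ← CharTwo.add_eq_zero]
    linear_combination CharTwo.add_self_eq_zero (φ s(innerA s 0, innerA s 1)) -
      flow_innerA hφ 0 - flow_innerA hφ 1
  | succ i ih =>
    refine add_left_cancel (a := φ s(column s i 1, column s (i + 1) 1)) ?_
    rw [← flow_rung hφ hi 1, ih (by omega), ← flow_rung hφ hi 0]

lemma forall_flow_iff (hφ : φ ∈ flowSpace K (gStar s).edgeFinset) {p : K → Prop} :
    (∀ e ∈ (gStar s).edgeSet, p (φ e)) ↔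
      LadderValues p (fun i : Fin (s + 1) => φ s(column s i 0, column s (i + 1) 0)) ∧
      CapValues p (φ s(column s 0 0, column s 1 0)) (fun k => φ s(innerA s 0, column s 0 k)) ∧
      CapValues p (φ s(column s s 0, column s (s + 1) 0))
        (fun k => φ s(innerB s 0, column s (s + 1) k)) := by
  have hA (k : Fin 2) : φ s(innerA s 1, column s 0 k) =
      φ s(innerA s 0, column s 0 k) + φ s(column s 0 0, column s 1 0) := by
    rw [← flow_rail hφ s.zero_le k, flow_column_zero hφ, CharTwo.add_cancel_left]
  have hB (k : Fin 2) : φ s(innerB s 1, column s (s + 1) k) =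
      φ s(innerB s 0, column s (s + 1) k) + φ s(column s s 0, column s (s + 1) 0) := by
    rw [← flow_rail hφ le_rfl k, flow_column_last hφ, CharTwo.add_cancel_left]
  rw [forall_mem_edgeSet_iff (p := fun e => p (φ e))]
  refine and_congr (and_congr ?_ ?_) (and_congr (and_congr ?_ ?_) (and_congr ?_ ?_))
  · exact ⟨fun h i => h i (by omega) 0, fun h i hi j => flow_rail hφ hi j ▸ h ⟨i, by omega⟩⟩
  · exact ⟨fun h i => flow_rung hφ i.2 0 ▸ h i i.2, fun h i hi => flow_rung hφ hi 0 ▸ h ⟨i, hi⟩⟩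
  · rw [Fin.forall_fin_two (p := fun j => ∀ k, _)]; simp only [hA]
  · rw [flow_innerA hφ 0]
  · rw [Fin.forall_fin_two (p := fun j => ∀ k, _)]; simp only [hB]
  · rw [flow_innerB hφ 0]

variable (s K)

/-- The values of a flow on one rail of the ladder and on the edges leaving `a₃` and `b₃` for the
ladder; they determine the flow. -/
def flowCoord : flowSpace K (gStar s).edgeFinset →ₗ[K]
    (Fin (s + 1) → K) × (Fin 2 → K) × (Fin 2 → K) where
  toFun φ := (fun i => φ.1 s(column s i 0, column s (i + 1) 0),
    fun k => φ.1 s(innerA s 0, column s 0 k), fun k => φ.1 s(innerB s 0, column s (s + 1) k))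
  map_add' _ _ := rfl
  map_smul' _ _ := rfl

lemma finrank_flowSpace : Module.finrank K (flowSpace K (gStar s).edgeFinset) = s + 5 := by
  have hrank := finrank_flowSpace_edgeFinset (K := K) (connected s)
  have hsum := (gStar s).sum_degrees_eq_twice_card_edges
  simp only [isRegularOfDegree.degree_eq, Finset.sum_const, Finset.card_univ, smul_eq_mul] at hsum
  rw [card_vertices] at hrank hsum
  omega

lemma flowCoord_injective : Function.Injective (flowCoord s K) := by
  rw [injective_iff_map_eq_zero]
  rintro ⟨φ, hφ⟩ hzero
  obtain ⟨hx, ha, hb⟩ : (∀ i : Fin (s + 1), φ s(column s i 0, column s (i + 1) 0) = 0) ∧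
      (∀ k, φ s(innerA s 0, column s 0 k) = 0) ∧
      ∀ k, φ s(innerB s 0, column s (s + 1) k) = 0 := by
    simpa [flowCoord, funext_iff] using hzero
  have hedge : ∀ e ∈ (gStar s).edgeSet, φ e = 0 := by
    rw [forall_flow_iff hφ (p := (· = 0))]
    have hfirst : φ s(column s 0 0, column s 1 0) = 0 := hx 0
    have hlast : φ s(column s s 0, column s (s + 1) 0) = 0 := hx (Fin.last s)
    simp only [LadderValues, CapValues, ha, hb, hx, hfirst, hlast, add_zero, implies_true, and_self]
  refine Subtype.ext (funext fun e => ?_)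
  by_cases he : e ∈ (gStar s).edgeSet
  exacts [hedge e he, hφ.1 e (by simpa using he)]

lemma flowCoord_bijective : Function.Bijective (flowCoord s K) := by
  refine ⟨flowCoord_injective s K,
    (LinearMap.injective_iff_surjective_of_finrank_eq_finrank ?_).1 (flowCoord_injective s K)⟩
  rw [finrank_flowSpace]
  simp

omit [DecidableRel (gStar s).Adj] in
lemma eval_flowPoly_gStar [Fintype K] : (flowPoly (gStar s)).eval (Fintype.card K : ℤ) =
    ((Nat.card K - 1) * (Nat.card K - 2) ^ (s + 2) * (Nat.card K - 3) ^ 2 : ℕ) := by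
  classical
  have e : {φ : flowSpace K (gStar s).edgeFinset // ∀ e ∈ (gStar s).edgeFinset, φ.1 e ≠ 0} ≃
      {t : (Fin (s + 1) → K) × (Fin 2 → K) × (Fin 2 → K) // LadderValues (· ≠ 0) t.1 ∧
        CapValues (· ≠ 0) (t.1 0) t.2.1 ∧ CapValues (· ≠ 0) (t.1 (Fin.last s)) t.2.2} :=
    (Equiv.ofBijective _ (flowCoord_bijective s K)).subtypeEquiv fun φ => by
      simp only [SimpleGraph.mem_edgeFinset]
      exact forall_flow_iff φ.2 (p := (· ≠ 0))
  rw [eval_flowPoly, Nat.card_congr e, natCard_subtype_prod_and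
    (p := fun x : Fin (s + 1) → K => LadderValues (· ≠ 0) x)
    (q := fun x (y : _ × _) => CapValues (· ≠ 0) (x 0) y.1 ∧ CapValues (· ≠ 0) (x (Fin.last s)) y.2)
    (k := ((Nat.card K - 2) * (Nat.card K - 3)) * ((Nat.card K - 2) * (Nat.card K - 3)))
    fun x hx => ?_, natCard_ladderValues_ne_zero]
  · congr 1; ring
  · rw [natCard_subtype_prod_and (p := CapValues (· ≠ 0) (x 0))
      (q := fun _ => CapValues (· ≠ 0) (x (Fin.last s)))
      fun _ _ => natCard_capValues_ne_zero (hx.1 _), natCard_capValues_ne_zero (hx.1 _)]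

end gStar

lemma eq_of_forall_eval_card_eq {p q : ℤ[X]}
    (h : ∀ (K : Type) [Field K] [Fintype K] [CharP K 2], 4 ≤ Fintype.card K →
      p.eval (Fintype.card K : ℤ) = q.eval (Fintype.card K : ℤ)) : p = q := by
  refine Polynomial.eq_of_infinite_eval_eq p q (Set.infinite_of_injective_forall_mem
    (f := fun k : ℕ => (2 : ℤ) ^ (k + 2)) (fun a b hab => ?_) fun k => ?_)
  · simpa using Int.pow_right_injective (by decide) hab
  · let _ := Fintype.ofFinite (GaloisField 2 (k + 2))
    have hcard : Fintype.card (GaloisField 2 (k + 2)) = 2 ^ (k + 2) := by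
      rw [← Nat.card_eq_fintype_card, GaloisField.card 2 _ (by omega)]
    simpa [hcard] using h (GaloisField 2 (k + 2)) (by
      rw [hcard, pow_add]
      exact Nat.le_mul_of_pos_left 4 (by positivity))

lemma flowPoly_gStar (s : ℕ) :
    flowPoly (gStar s) = (X - 1) * (X - 2) ^ (s + 2) * (X - 3) ^ 2 := by
  classical
  refine eq_of_forall_eval_card_eq fun K _ _ _ hK => ?_
  rw [gStar.eval_flowPoly_gStar, Nat.card_eq_fintype_card]
  push_cast [Nat.cast_sub (show 1 ≤ Fintype.card K by omega),
    Nat.cast_sub (show 2 ≤ Fintype.card K by omega),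
    Nat.cast_sub (show 3 ≤ Fintype.card K by omega)]
  simp

end GStarFlow

section ComparisonPolynomial

lemma coeff_X_add_one_mul_X_add_two_pow_mul_X_add_three_sq (k : ℕ) :
    ((X + 1) * (X + 2) ^ k * (X + 3) ^ 2 : ℤ[X]).coeff (k + 2) = 2 * k + 7 := by
  rw [show (X + 1 : ℤ[X]) = X + C 1 by simp, show (X + 2 : ℤ[X]) = X + C 2 by simp,
    show (X + 3 : ℤ[X]) = X + C 3 by simp]
  have h1 := monic_X_add_C (1 : ℤ)
  have h2 := monic_X_add_C (2 : ℤ)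
  have h3 := monic_X_add_C (3 : ℤ)
  have hdegree : ((X + C 1) * (X + C 2) ^ k * (X + C 3) ^ 2 : ℤ[X]).natDegree = k + 3 := by
    rw [(h1.mul (h2.pow k)).natDegree_mul (h3.pow 2), h1.natDegree_mul (h2.pow k),
      h2.natDegree_pow, h3.natDegree_pow]
    simp only [natDegree_X_add_C]
    omega
  have hnext := nextCoeff_of_natDegree_pos ((k + 2).succ_pos.trans_eq hdegree.symm)
  rw [hdegree, (h1.mul (h2.pow k)).nextCoeff_mul (h3.pow 2), h1.nextCoeff_mul (h2.pow k),
    h2.nextCoeff_pow, h3.nextCoeff_pow] at hnext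
  simp only [nextCoeff_X_add_C, nsmul_eq_mul] at hnext
  rw [show k + 2 = k + 3 - 1 by omega, ← hnext]
  push_cast
  ring

lemma abs_coeff_X_sub_one_mul_X_sub_two_pow_mul_X_sub_three_sq (k i : ℕ) :
    |((X - 1) * (X - 2) ^ k * (X - 3) ^ 2 : ℤ[X]).coeff i| =
      ((X + 1) * (X + 2) ^ k * (X + 3) ^ 2 : ℤ[X]).coeff i := by
  have hcomp : ((X - 1) * (X - 2) ^ k * (X - 3) ^ 2 : ℤ[X]).comp (C (-1) * X) =
      C ((-1) ^ (k + 1)) * ((X + 1) * (X + 2) ^ k * (X + 3) ^ 2) := by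
    simp only [mul_comp, pow_comp, sub_comp, X_comp, one_comp, ofNat_comp, Nat.cast_ofNat,
      map_pow, map_neg, map_one]
    rw [show (-1 * X - 2 : ℤ[X]) = -1 * (X + 2) by ring, mul_pow]
    ring
  have hnonneg : 0 ≤ ((X + 1) * (X + 2) ^ k * (X + 3) ^ 2 : ℤ[X]).coeff i := by
    have hmap : ((X + 1) * (X + 2) ^ k * (X + 3) ^ 2 : ℤ[X]) =
        ((X + 1) * (X + 2) ^ k * (X + 3) ^ 2 : ℕ[X]).map (Nat.castRingHom ℤ) := by simp
    rw [hmap, coeff_map]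
    exact Int.natCast_nonneg _
  have hcoeff := congrArg (fun p => |coeff p i|) hcomp
  simpa only [comp_C_mul_X_coeff, coeff_C_mul, abs_mul, abs_pow, abs_neg, abs_one, one_pow,
    one_mul, mul_one, abs_of_nonneg hnonneg] using hcoeff

end ComparisonPolynomial

theorem stmt_5_general {V : Type} [Fintype V] (G : SimpleGraph V)
    (hconn : G.Connected) (hbridgeless : ∀ e : Sym2 V, ¬ G.IsBridge e)
    (hcubic : ∀ v : V, Nat.card (G.neighborSet v) = 3)
    (n m : ℕ) (hn : n = Fintype.card V) (hm : m = edgeCount G) (hn8 : 8 ≤ n) :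
    (∀ i ≤ m - n + 1,
        ((X + 1) * (X + 2) ^ (n / 2 - 2) * (X + 3) ^ 2 : Polynomial ℤ).coeff i =
          |(flowPoly G).coeff i|) ↔
      Nonempty (G ≃g gStar (n / 2 - 4)) := by
  classical
  have hregular : G.IsRegularOfDegree 3 := fun v => by
    rw [← hcubic v, Nat.card_eq_fintype_card, SimpleGraph.card_neighborSet_eq_degree]
  have hedges : m = G.edgeFinset.card := by rw [hm, edgeCount, Set.toFinite_toFinset]; rfl
  have hhandshake : n * 3 = 2 * m := by
    rw [hn, hedges, ← G.sum_degrees_eq_twice_card_edges]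
    simp [hregular.degree_eq]
  obtain ⟨s, rfl⟩ : ∃ s, n = 2 * s + 8 := ⟨n / 2 - 4, by omega⟩
  rw [show (2 * s + 8) / 2 - 2 = s + 2 by omega, show (2 * s + 8) / 2 - 4 = s by omega]
  refine ⟨fun hcoeff => ?_, fun ⟨f⟩ i _ => ?_⟩
  · refine nonempty_iso_gStar (ZMod 2) hconn hbridgeless hregular hn.symm ?_
    have h := hcoeff (s + 2 + 2) (by omega)
    rw [coeff_X_add_one_mul_X_add_two_pow_mul_X_add_three_sq, coeff_flowPoly_eq_neg_card_image
      (ZMod 2) hconn hbridgeless (by omega), abs_neg, Nat.abs_cast] at h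
    omega
  · rw [flowPoly_eq_of_iso f, flowPoly_gStar,
      abs_coeff_X_sub_one_mul_X_sub_two_pow_mul_X_sub_three_sq]

/-- Equality in the lower bound of Theorem 5 holds iff `G ≅ G*`. -/
theorem stmt_5 {V : Type} [Fintype V] (G : SimpleGraph V)
    (hconn : G.Connected) (hbridgeless : ∀ e : Sym2 V, ¬ G.IsBridge e)
    (hcubic : ∀ v : V, Nat.card (G.neighborSet v) = 3)
    (hreal : ∀ z : ℂ, ((flowPoly G).map (Int.castRingHom ℂ)).IsRoot z → z.im = 0)
    (n m : ℕ) (hn : n = Fintype.card V) (hm : m = edgeCount G)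
    (heven : Even n) (hn8 : 8 ≤ n) :
    (∀ i ≤ m - n + 1,
        ((X + 1) * (X + 2) ^ (n / 2 - 2) * (X + 3) ^ 2 : Polynomial ℤ).coeff i =
          |(flowPoly G).coeff i|) ↔
      Nonempty (G ≃g gStar (n / 2 - 4)) :=
  stmt_5_general G hconn hbridgeless hcubic n m hn hm hn8
end

section
/- Let G be a connected bridgeless finite simple cubic graph on n vertices whose flow polynomial F(G,t) has only real roots. Then F(G,t), which has degree n/2 + 1, has 1 as a root of multiplicity exactly 1, and all of its remaining n/2 roots (counted with multiplicity) are greater than or equal to 2. -/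
open Polynomial

/-!
Write `F(t) = (t - 1) * Q(t)`. The claim is that `(-1) ^ deg Q * Q(t) > 0` for all `t < 2`; its
value at `t = 1` shows that `1` is a simple root. This is proved by deletion and contraction for
all bridgeless graphs in which every vertex except a root has degree at most three and the root is
not a cut vertex. Among the neighbors of the root there is one, `u`, whose identification with the
root leaves the root noncut: take one farthest from a fixed vertex in the graph without the root.
For an edge `e` from `u` to the root, `F(D) = F(D / e) - F(D - e)`, and either `D - e` has a bridge,
so that `F(D - e) = 0`, or both graphs are again of the same kind and the degrees of their flow
polynomials differ by one, so that the signs agree. If `u` has two edges to the root, then removing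
both and identifying `u` with the root gives a graph `D'` with `F(D) = (t - 2) * F(D')`.
-/

open SimpleGraph

section Components

variable {V : Type*} {G H : SimpleGraph V} {a b : V}

theorem nontrivial_of_natCard_neighborSet_ne_zero (h : Nat.card (G.neighborSet a) ≠ 0) :
    Nontrivial V := by
  obtain ⟨⟨w, hw⟩⟩ := (Nat.card_ne_zero.1 h).1
  exact ⟨a, w, hw.ne⟩

theorem exists_adj_mem_notMem_of_reachable (h : G.Reachable a b) {A : Set V} (ha : a ∈ A)
    (hb : b ∉ A) : ∃ v ∈ A, ∃ w ∉ A, G.Adj v w := by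
  obtain ⟨p⟩ := h
  obtain ⟨d, -, hd, hd'⟩ := p.exists_boundary_dart A ha hb
  exact ⟨d.fst, hd, d.snd, hd', d.adj⟩

theorem reachable_of_forall_adj_reachable (h : ∀ v w, G.Adj v w → H.Reachable v w)
    (hab : G.Reachable a b) : H.Reachable a b := by
  obtain ⟨p⟩ := hab
  induction p with
  | nil => rfl
  | cons hadj _ ih => exact (h _ _ hadj).trans ih

theorem reachable_sup_congr {G' : SimpleGraph V} (h : G.Reachable = G'.Reachable) :
    (H ⊔ G).Reachable = (H ⊔ G').Reachable := by
  have key {G G' : SimpleGraph V} (h : G.Reachable = G'.Reachable) {a b : V} :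
      (H ⊔ G).Reachable a b → (H ⊔ G').Reachable a b :=
    reachable_of_forall_adj_reachable fun v w hvw ↦ hvw.elim
      (fun hH ↦ (Adj.reachable hH).mono le_sup_left)
      fun hG ↦ (h ▸ Adj.reachable hG : G'.Reachable v w).mono le_sup_right
  exact funext₂ fun a b ↦ propext ⟨key h, key h.symm⟩

theorem card_connectedComponent_congr (h : G.Reachable = H.Reachable) :
    Nat.card G.ConnectedComponent = Nat.card H.ConnectedComponent := by
  simp only [ConnectedComponent, h]

theorem reachable_sup_edge_eq (h : G.Reachable a b) : (G ⊔ edge a b).Reachable = G.Reachable := by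
  refine funext₂ fun v w ↦ propext ⟨reachable_of_forall_adj_reachable ?_, .mono le_sup_left⟩
  rintro x y (hxy | hxy)
  · exact hxy.reachable
  · obtain ⟨rfl, rfl⟩ | ⟨rfl, rfl⟩ := ((edge_adj ..).1 hxy).1
    exacts [h, h.symm]

theorem reachable_of_reachable_sup_edge {v w : V} (h : (G ⊔ edge a b).Reachable v w)
    (hv : ¬ G.Reachable v a) (hw : ¬ G.Reachable w a) : G.Reachable v w := by
  by_contra hvw
  obtain ⟨x, hx, y, hy, hxy | hxy⟩ := exists_adj_mem_notMem_of_reachable h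
    (A := {x | G.Reachable v x}) .rfl hvw
  · exact hy (hx.trans hxy.reachable)
  · obtain ⟨rfl, rfl⟩ | ⟨rfl, rfl⟩ := ((edge_adj ..).1 hxy).1
    · exact hv hx
    · obtain ⟨z, hz, t, ht, hzt | hzt⟩ := exists_adj_mem_notMem_of_reachable h.symm
        (A := {z | G.Reachable w z}) .rfl (fun h ↦ hvw h.symm)
      · exact ht (hz.trans hzt.reachable)
      · obtain ⟨rfl, rfl⟩ | ⟨rfl, rfl⟩ := ((edge_adj ..).1 hzt).1
        · exact hw hz
        · exact hvw (hx.trans (Reachable.symm hz))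

theorem card_connectedComponent_sup_edge_add_one [Finite V] (h : ¬ G.Reachable a b) :
    Nat.card (G ⊔ edge a b).ConnectedComponent + 1 = Nat.card G.ConnectedComponent := by
  have hab : a ≠ b := fun h' ↦ h (h' ▸ .rfl)
  have hadj : (G ⊔ edge a b).Adj b a := Or.inr ((edge_adj ..).2 ⟨.inr ⟨rfl, rfl⟩, hab.symm⟩)
  let f : ({G.connectedComponentMk a}ᶜ : Set G.ConnectedComponent) →
      (G ⊔ edge a b).ConnectedComponent := fun c ↦ c.1.map (Hom.ofLE le_sup_left)
  have hf : Function.Bijective f := by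
    constructor
    · rintro ⟨⟨v⟩, hv⟩ ⟨⟨w⟩, hw⟩ hvw
      exact Subtype.ext <| ConnectedComponent.sound <| reachable_of_reachable_sup_edge
        (ConnectedComponent.exact hvw) (fun h ↦ hv (ConnectedComponent.sound h))
        (fun h ↦ hw (ConnectedComponent.sound h))
    · rintro ⟨v⟩
      by_cases hv : G.Reachable v a
      · exact ⟨⟨G.connectedComponentMk b, fun h' ↦ h (ConnectedComponent.exact h').symm⟩,
          ConnectedComponent.sound (hadj.reachable.trans (hv.symm.mono le_sup_left))⟩
      · exact ⟨⟨G.connectedComponentMk v, fun h' ↦ hv (ConnectedComponent.exact h')⟩, rfl⟩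
  rw [← Nat.card_eq_of_bijective f hf, Nat.card_coe_set_eq, ← Set.ncard_singleton
    (G.connectedComponentMk a), add_comm, Set.ncard_add_ncard_compl]

theorem fromEdgeSet_insert_eq_sup_edge (Z : Set (Sym2 V)) :
    fromEdgeSet (insert s(a, b) Z) = fromEdgeSet Z ⊔ edge a b := by
  rw [Set.insert_eq, fromEdgeSet_union, sup_comm, edge]

theorem deleteEdges_singleton_lt (hab : G.Adj a b) : G.deleteEdges {s(a, b)} < G :=
  (deleteEdges_le _).lt_of_not_ge fun h ↦ (deleteEdges_adj.1 (h hab)).2 rfl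

theorem deleteEdges_singleton_adj_iff {c : V} :
    (G.deleteEdges {s(a, b)}).Adj a c ↔ G.Adj a c ∧ c ≠ b := by
  rw [deleteEdges_adj, Set.mem_singleton_iff, Sym2.congr_right]

theorem card_le_card_add_card_connectedComponent [Finite V] (Z : Finset (Sym2 V)) :
    Nat.card V ≤ Z.card + Nat.card (fromEdgeSet (Z : Set (Sym2 V))).ConnectedComponent := by
  classical
  induction Z using Finset.induction_on with
  | empty =>
    have hinj : Function.Injective (connectedComponentMk (⊥ : SimpleGraph V)) :=
      fun v w h ↦ reachable_bot.1 (ConnectedComponent.exact h)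
    simpa using Nat.card_le_card_of_injective _ hinj
  | insert e Z he ih =>
    induction e using Sym2.ind with | _ a b
    rw [Finset.card_insert_of_notMem he, Finset.coe_insert, fromEdgeSet_insert_eq_sup_edge]
    by_cases hab : (fromEdgeSet (Z : Set (Sym2 V))).Reachable a b
    · have := card_connectedComponent_congr (reachable_sup_edge_eq hab)
      omega
    · have := card_connectedComponent_sup_edge_add_one hab
      omega

end Components

section ContractFlow

variable {V : Type*} [Finite V] (R : Type*) [CommRing R] {H D : SimpleGraph V} {a b : V}

/-- The flow polynomial of the multigraph obtained from `D` by contracting the edges of `H`,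
multiplied by `t` to the number of its vertices so that no exponent involves a subtraction. The
edges of `D` are kept as a separate set: those inside a component of `H` become loops. -/
noncomputable def contractFlow (H D : SimpleGraph V) : R[X] :=
  ∑ Z ∈ D.edgeSet.toFinite.toFinset.powerset, (-1) ^ (D.edgeSet.ncard + Z.card) *
    X ^ (Z.card + Nat.card (fromEdgeSet (Z : Set (Sym2 V)) ⊔ H).ConnectedComponent)

theorem contractFlow_congr {H' : SimpleGraph V} (h : H.Reachable = H'.Reachable) :
    contractFlow R H D = contractFlow R H' D :=
  Finset.sum_congr rfl fun _ _ ↦ by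
    rw [card_connectedComponent_congr (reachable_sup_congr h)]

theorem contractFlow_bot_right : contractFlow R H ⊥ = X ^ Nat.card H.ConnectedComponent := by
  simp [contractFlow]

theorem ncard_edgeSet_deleteEdges_add_one (hab : D.Adj a b) :
    (D.deleteEdges {s(a, b)}).edgeSet.ncard + 1 = D.edgeSet.ncard := by
  rw [edgeSet_deleteEdges]
  exact Set.ncard_sdiff_singleton_add_one ((mem_edgeSet D).2 hab)

theorem contractFlow_eq (hab : D.Adj a b) :
    contractFlow R H D = X * contractFlow R (H ⊔ edge a b) (D.deleteEdges {s(a, b)}) -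
      contractFlow R H (D.deleteEdges {s(a, b)}) := by
  classical
  set D' := D.deleteEdges {s(a, b)} with hD'
  have hmem : s(a, b) ∉ D'.edgeSet.toFinite.toFinset := by simp [hD']
  have hins : D.edgeSet.toFinite.toFinset = insert s(a, b) D'.edgeSet.toFinite.toFinset := by
    ext e
    by_cases he : e = s(a, b) <;> simp [hD', edgeSet_deleteEdges, he, hab]
  have hcard : D.edgeSet.ncard = D'.edgeSet.ncard + 1 :=
    (ncard_edgeSet_deleteEdges_add_one hab).symm
  rw [contractFlow, hins, Finset.sum_powerset_insert hmem, add_comm, sub_eq_add_neg, contractFlow,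
    contractFlow, Finset.mul_sum, ← Finset.sum_neg_distrib]
  congr 1 <;> refine Finset.sum_congr rfl fun Z hZ ↦ ?_
  · rw [Finset.card_insert_of_notMem fun h ↦ hmem (Finset.mem_powerset.1 hZ h), Finset.coe_insert,
      fromEdgeSet_insert_eq_sup_edge, sup_right_comm, sup_assoc, hcard]
    ring
  · rw [hcard]
    ring

theorem contractFlow_of_reachable (hab : D.Adj a b) (h : H.Reachable a b) :
    contractFlow R H D = (X - 1) * contractFlow R H (D.deleteEdges {s(a, b)}) := by
  rw [contractFlow_eq R hab, contractFlow_congr R (reachable_sup_edge_eq h)]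
  ring

theorem contractFlow_eq_zero (hab : D.Adj a b)
    (h : ¬ (D.deleteEdges {s(a, b)} ⊔ H).Reachable a b) : contractFlow R H D = 0 := by
  rw [contractFlow_eq R hab, sub_eq_zero, contractFlow, contractFlow, Finset.mul_sum]
  refine Finset.sum_congr rfl fun Z hZ ↦ ?_
  have hle : fromEdgeSet (Z : Set (Sym2 V)) ≤ D.deleteEdges {s(a, b)} := by
    rw [← fromEdgeSet_edgeSet (D.deleteEdges {s(a, b)})]
    exact fromEdgeSet_mono fun e he ↦ by simpa using Finset.mem_powerset.1 hZ he
  rw [← card_connectedComponent_sup_edge_add_one fun h' ↦ h (h'.mono (sup_le_sup_right hle H)),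
    sup_assoc]
  ring

theorem contractFlow_bot_left {V : Type} [Fintype V] (G : SimpleGraph V) :
    contractFlow R ⊥ G = X ^ Fintype.card V * (flowPoly G).map (Int.castRingHom R) := by
  rw [contractFlow, flowPoly, Polynomial.map_sum, Finset.mul_sum]
  refine Finset.sum_congr rfl fun Z hZ ↦ ?_
  have hm := Finset.card_le_card (Finset.mem_powerset.1 hZ)
  have hn := card_le_card_add_card_connectedComponent Z
  rw [← Set.ncard_eq_toFinset_card] at hm ⊢
  rw [Nat.card_eq_fintype_card] at hn
  obtain ⟨k, hk⟩ := Nat.exists_eq_add_of_le hn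
  obtain ⟨l, hl⟩ := Nat.exists_eq_add_of_le hm
  have hsign : (-1 : R[X]) ^ (Z.card + l + Z.card) = (-1) ^ l := by
    rw [add_right_comm, pow_add, ← two_mul, Even.neg_one_pow (even_two_mul _), one_mul]
  rw [sup_bot_eq, hk, hl, hsign, Nat.add_sub_cancel_left, Nat.add_sub_cancel_left]
  simp only [zsmul_eq_mul, Polynomial.map_mul, Polynomial.map_pow, Polynomial.map_X,
    Int.cast_pow, Int.cast_neg, Int.cast_one, Polynomial.map_neg, Polynomial.map_one]
  ring

end ContractFlow

section Clique

variable {V : Type*} {S : Set V} {D : SimpleGraph V} {u x y : V}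

/-- The complete graph on `S`, as a graph on all of `V`. Contracting its edges identifies the
vertices of `S` to a single vertex, the root, and leaves the other vertices alone. -/
def cliqueOn (S : Set V) : SimpleGraph V where
  Adj a b := a ∈ S ∧ b ∈ S ∧ a ≠ b
  symm := ⟨fun _ _ h ↦ ⟨h.2.1, h.1, h.2.2.symm⟩⟩
  loopless := ⟨fun _ h ↦ h.2.2 rfl⟩

theorem cliqueOn_singleton (x : V) : cliqueOn {x} = ⊥ := by
  ext a b
  simp only [cliqueOn, Set.mem_singleton_iff, bot_adj, iff_false]
  rintro ⟨rfl, rfl, h⟩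
  exact h rfl

theorem reachable_cliqueOn {a b : V} (ha : a ∈ S) (hb : b ∈ S) : (cliqueOn S).Reachable a b := by
  by_cases hab : a = b
  · exact hab ▸ .rfl
  · exact Adj.reachable ⟨ha, hb, hab⟩

theorem cliqueOn_mono {T : Set V} (h : S ⊆ T) : cliqueOn S ≤ cliqueOn T :=
  fun _ _ hab ↦ ⟨h hab.1, h hab.2.1, hab.2.2⟩

theorem le_deleteEdges_sup_cliqueOn (hu : u ∈ S) (hx : x ∈ S) :
    D ≤ D.deleteEdges {s(u, x)} ⊔ cliqueOn S := by
  intro a b hab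
  by_cases h : s(a, b) = s(u, x)
  · obtain ⟨rfl, rfl⟩ | ⟨rfl, rfl⟩ := Sym2.eq_iff.1 h
    exacts [.inr ⟨hu, hx, hab.ne⟩, .inr ⟨hx, hu, hab.ne⟩]
  · exact .inl (deleteEdges_adj.2 ⟨hab, h⟩)

theorem reachable_cliqueOn_sup_edge (hx : x ∈ S) :
    (cliqueOn S ⊔ edge u x).Reachable = (cliqueOn (insert u S)).Reachable := by
  refine funext₂ fun a b ↦ propext ⟨.mono (sup_le (cliqueOn_mono (Set.subset_insert u S)) ?_),
    reachable_of_forall_adj_reachable fun v w hvw ↦ ?_⟩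
  · exact (edge_le_iff _).2 <| or_iff_not_imp_left.2 fun h ↦
      ⟨Set.mem_insert u S, Set.mem_insert_of_mem u hx, h⟩
  · have reachable_x {v : V} (hv : v ∈ insert u S) : (cliqueOn S ⊔ edge u x).Reachable v x := by
      obtain rfl | hv := hv
      · by_cases h : v = x
        · exact h ▸ .rfl
        · exact Adj.reachable (.inr ((edge_adj ..).2 ⟨.inl ⟨rfl, rfl⟩, h⟩))
      · exact (reachable_cliqueOn hv hx).mono le_sup_left
    exact (reachable_x hvw.1).trans (reachable_x hvw.2.1).symm

variable (R : Type*) [CommRing R] [Finite V]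

theorem contractFlow_cliqueOn_eq (hx : x ∈ S) (hux : D.Adj u x) :
    contractFlow R (cliqueOn S) D =
      X * contractFlow R (cliqueOn (insert u S)) (D.deleteEdges {s(u, x)}) -
        contractFlow R (cliqueOn S) (D.deleteEdges {s(u, x)}) := by
  rw [contractFlow_eq R hux, contractFlow_congr R (reachable_cliqueOn_sup_edge hx)]

theorem contractFlow_cliqueOn_eq_zero (hu : u ∉ S) (huy : D.Adj u y)
    (h : ∀ w, D.Adj u w → w = y) : contractFlow R (cliqueOn S) D = 0 := by
  refine contractFlow_eq_zero R huy fun hreach ↦ ?_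
  obtain ⟨v, rfl, w, -, hvw | hvw⟩ := exists_adj_mem_notMem_of_reachable hreach
    (A := {u}) rfl huy.ne'
  · rw [deleteEdges_singleton_adj_iff] at hvw
    exact hvw.2 (h w hvw.1)
  · exact hu hvw.1

theorem contractFlow_cliqueOn_univ_edge (h : u ≠ y) :
    contractFlow R (cliqueOn Set.univ) (edge u y) = (X - 1) * X := by
  have hadj : (edge u y).Adj u y := (edge_adj ..).2 ⟨.inl ⟨rfl, rfl⟩, h⟩
  have hcard : Nat.card (cliqueOn (Set.univ : Set V)).ConnectedComponent = 1 := by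
    have : Nonempty V := ⟨u⟩
    have : (cliqueOn (Set.univ : Set V)).Preconnected :=
      fun a b ↦ reachable_cliqueOn (Set.mem_univ a) (Set.mem_univ b)
    have := this.subsingleton_connectedComponent
    exact Nat.card_unique
  have hbot : (edge u y).deleteEdges {s(u, y)} = ⊥ := by
    rw [edge, deleteEdges_fromEdgeSet, sdiff_self, Set.bot_eq_empty, fromEdgeSet_empty]
  rw [contractFlow_of_reachable R hadj (reachable_cliqueOn (Set.mem_univ u) (Set.mem_univ y)),
    hbot, contractFlow_bot_right, hcard, pow_one]

end Clique

section Separation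

variable {V : Type*} {D : SimpleGraph V}

theorem preconnected_induce_iff_forall_exists_adj {W : Set V} :
    (D.induce W).Preconnected ↔
      ∀ A ⊆ W, A.Nonempty → (W \ A).Nonempty → ∃ v ∈ A, ∃ w ∈ W \ A, D.Adj v w := by
  constructor
  · rintro h A hAW ⟨a, ha⟩ ⟨b, hb⟩
    obtain ⟨v, hv, w, hw, hvw⟩ := exists_adj_mem_notMem_of_reachable
      (h ⟨a, hAW ha⟩ ⟨b, hb.1⟩) (A := Subtype.val ⁻¹' A) ha hb.2
    exact ⟨v, hv, w, ⟨w.2, hw⟩, hvw⟩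
  · intro h a b
    by_contra hab
    obtain ⟨_, ⟨v, hv, rfl⟩, w, ⟨hwW, hw⟩, hvw⟩ := h
      (Subtype.val '' {c : W | (D.induce W).Reachable a c})
      (Subtype.coe_image_subset _ _) ⟨a, a, .rfl, rfl⟩
      ⟨b, b.2, fun ⟨c, hc, hcb⟩ ↦ hab (Subtype.ext hcb ▸ hc)⟩
    exact hw ⟨⟨w, hwW⟩, Reachable.trans hv (Adj.reachable hvw), rfl⟩

theorem dist_lt_dist_of_forall_adj_eq (h : D.Connected) {A : Set V} {r u a : V} (hr : r ∉ A)
    (ha : a ∈ A) (hA : ∀ v ∉ A, ∀ w ∈ A, D.Adj v w → v = u) : D.dist r u < D.dist r a := by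
  classical
  obtain ⟨p, hp⟩ := h.exists_walk_length_eq_dist r a
  obtain ⟨d, hd, hdA, hdA'⟩ := p.exists_boundary_dart Aᶜ hr (not_not.2 ha)
  obtain rfl := hA _ hdA _ (not_not.1 hdA') d.adj
  have hmem := p.dart_fst_mem_support_of_mem_darts hd
  calc D.dist r d.fst ≤ (p.takeUntil d.fst hmem).length := dist_le _
    _ < p.length := Walk.length_takeUntil_lt_length hmem fun h ↦ hdA (h ▸ ha)
    _ = D.dist r a := hp

theorem eq_or_eq_or_eq_of_ncard_le_three {s : Set V} (hs : s.Finite) (hcard : s.ncard ≤ 3)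
    {a b c d : V} (ha : a ∈ s) (hb : b ∈ s) (hc : c ∈ s) (hd : d ∈ s) (hab : a ≠ b) (hac : a ≠ c)
    (hbc : b ≠ c) : d = a ∨ d = b ∨ d = c := by
  have h : ({a, b, c} : Set V) = s := Set.eq_of_subset_of_ncard_le
    (by simp [Set.insert_subset_iff, ha, hb, hc])
    (by rwa [Set.ncard_eq_three.2 ⟨a, b, c, hab, hac, hbc, rfl⟩]) hs
  rw [← h] at hd
  simpa using hd

end Separation

section RootedSubcubic

variable {V : Type*} {S : Set V} {D : SimpleGraph V} {u x y : V}

/-- The graph obtained from `D` by identifying the vertices of `S` to a root is loopless and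
bridgeless, its vertices other than the root have degree at most three, and deleting the root
leaves it connected. This is the class of graphs on which the induction over deletion and
contraction runs: it contains the bridgeless connected subcubic graphs rooted at a noncut vertex,
and the degree of the root is unrestricted so that edges at the root can be contracted. -/
structure IsRootedSubcubic (S : Set V) (D : SimpleGraph V) : Prop where
  not_adj : ∀ a ∈ S, ∀ b ∈ S, ¬ D.Adj a b
  ncard_neighborSet_le : ∀ v ∉ S, (D.neighborSet v).ncard ≤ 3
  bridgeless : ∀ a b, D.Adj a b → (D.deleteEdges {s(a, b)} ⊔ cliqueOn S).Reachable a b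
  connected : (D.induce Sᶜ).Connected
  exists_adj : ∃ v ∉ S, ∃ a ∈ S, D.Adj v a

namespace IsRootedSubcubic

theorem exists_adj_notMem_insert (hD : IsRootedSubcubic S D) (hu : u ∉ S)
    (hne : (insert u S)ᶜ.Nonempty) : ∃ w ∉ insert u S, D.Adj u w := by
  obtain ⟨v, hv⟩ := hne
  obtain ⟨_, rfl, w, hw, huw⟩ := preconnected_induce_iff_forall_exists_adj.1
    hD.connected.preconnected {u} (Set.singleton_subset_iff.2 hu) ⟨u, rfl⟩
    ⟨v, fun h ↦ hv (Set.mem_insert_of_mem u h), fun h ↦ hv (Set.mem_insert_iff.2 (.inl h))⟩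
  exact ⟨w, fun h ↦ h.elim hw.2 hw.1, huw⟩

theorem exists_adj_ne (hD : IsRootedSubcubic S D) (hu : u ∉ S) (hx : x ∈ S) (hux : D.Adj u x) :
    ∃ y ≠ x, D.Adj u y ∧ (y ∈ S → (insert u S)ᶜ = ∅) := by
  obtain hS | hne := (insert u S)ᶜ.eq_empty_or_nonempty
  · obtain ⟨v, rfl, y, -, hvy | hvy⟩ := exists_adj_mem_notMem_of_reachable
      (hD.bridgeless u x hux) (A := {u}) rfl hux.ne'
    · rw [deleteEdges_singleton_adj_iff] at hvy
      exact ⟨y, hvy.2, hvy.1, fun _ ↦ hS⟩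
    · exact absurd hvy.1 hu
  · obtain ⟨y, hy, huy⟩ := hD.exists_adj_notMem_insert hu hne
    rw [Set.mem_insert_iff, not_or] at hy
    exact ⟨y, fun h ↦ hy.2 (h ▸ hx), huy, fun h ↦ absurd h hy.2⟩

theorem eq_edge (hD : IsRootedSubcubic S D) (hS : (insert u S)ᶜ = ∅) {D' : SimpleGraph V}
    (hle : D' ≤ D) (hN : ∀ w, D'.Adj u w ↔ w = y) : D' = edge u y := by
  have hmem (v : V) : v = u ∨ v ∈ S := by
    have : v ∈ insert u S := Set.compl_empty_iff.1 hS ▸ Set.mem_univ v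
    exact this
  ext a b
  rw [edge_adj]
  constructor
  · intro hab
    refine ⟨?_, hab.ne⟩
    obtain rfl | ha := hmem a
    · exact .inl ⟨rfl, (hN b).1 hab⟩
    · obtain rfl | hb := hmem b
      · exact .inr ⟨(hN a).1 hab.symm, rfl⟩
      · exact absurd (hle hab) (hD.not_adj a ha b hb)
  · rintro ⟨⟨rfl, rfl⟩ | ⟨rfl, rfl⟩, -⟩
    exacts [(hN _).2 rfl, ((hN _).2 rfl).symm]

variable [Finite V]

theorem eq_or_eq_or_eq (hD : IsRootedSubcubic S D) (hu : u ∉ S) {a b c d : V} (ha : D.Adj u a)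
    (hb : D.Adj u b) (hc : D.Adj u c) (hd : D.Adj u d) (hab : a ≠ b) (hac : a ≠ c) (hbc : b ≠ c) :
    d = a ∨ d = b ∨ d = c :=
  eq_or_eq_or_eq_of_ncard_le_three (D.neighborSet u).toFinite (hD.ncard_neighborSet_le u hu)
    ha hb hc hd hab hac hbc

/-- Were no vertex of `A` adjacent to the root, `u` would have a single neighbor in `A`, as it has
others at the root and in the rest of the graph, and the edge to it would be a bridge. -/
theorem exists_mem_adj_of_separation (hD : IsRootedSubcubic S D) (hu : u ∉ S) (hx : x ∈ S)
    (hux : D.Adj u x) {A : Set V} (hA : A ⊆ (insert u S)ᶜ) (hAne : A.Nonempty)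
    (hBne : ((insert u S)ᶜ \ A).Nonempty)
    (hAB : ∀ v ∈ A, ∀ w ∈ (insert u S)ᶜ \ A, ¬ D.Adj v w) : ∃ v ∈ A, ∃ a ∈ S, D.Adj v a := by
  by_contra! hAS
  have hAS' {v : V} (hv : v ∈ A) : v ∉ S := fun hvS ↦ hA hv (Set.mem_insert_of_mem u hvS)
  have hconn := preconnected_induce_iff_forall_exists_adj.1 hD.connected.preconnected
  have adj_u {v w : V} (hv : v ∈ A) (hw : w ∉ A) (hvw : D.Adj v w) : w = u := by
    by_contra hwu
    refine hAB v hv w ⟨?_, hw⟩ hvw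
    rintro (rfl | hwS)
    exacts [hwu rfl, hAS v hv w hwS hvw]
  obtain ⟨p, hp, q, hq, hpq⟩ := hconn A (fun v ↦ hAS') hAne
    ⟨u, hu, fun h ↦ hA h (Set.mem_insert u S)⟩
  obtain rfl := adj_u hp hq.2 hpq
  obtain ⟨p', hp', q', hq', hpq'⟩ := hconn ((insert q S)ᶜ \ A)
    (fun v hv h ↦ hv.1 (Set.mem_insert_of_mem q h)) hBne ⟨q, hu, fun h ↦ h.1 (Set.mem_insert q S)⟩
  have hq'q : q' = q := by
    by_contra hne
    refine hAB q' (by_contra fun hq'A ↦ hq'.2 ⟨?_, hq'A⟩) p' hp' hpq'.symm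
    exact fun h ↦ h.elim hne hq'.1
  subst hq'q
  obtain ⟨v, hv, w, hw, hvw | hvw⟩ := exists_adj_mem_notMem_of_reachable
    (hD.bridgeless p q' hpq) hp hq.2
  · rw [deleteEdges_adj] at hvw
    obtain rfl := adj_u hv hw hvw.1
    obtain rfl | rfl | rfl := hD.eq_or_eq_or_eq hu hpq.symm hux hpq'.symm hvw.1.symm
      (fun h ↦ hAS' hp (h ▸ hx)) (fun h ↦ hp'.2 (h ▸ hp))
      (fun h ↦ hp'.1 (Set.mem_insert_of_mem w (h ▸ hx)))
    exacts [hvw.2 rfl, hAS' hv hx, hp'.2 hv]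
  · exact hAS' hv hvw.1

/-- Among the neighbors of the root take one as far as possible from a fixed vertex `r`. A part of
the graph that it separates from `r` would contain a neighbor of the root further away. -/
theorem exists_adj_preconnected (hD : IsRootedSubcubic S D) :
    ∃ u ∉ S, ∃ x ∈ S, D.Adj u x ∧ (D.induce (insert u S)ᶜ).Preconnected := by
  obtain ⟨r⟩ := hD.connected.nonempty
  have hne : {v : (Sᶜ : Set V) | ∃ x ∈ S, D.Adj v x}.Nonempty := by
    obtain ⟨v, hv, x, hx, hvx⟩ := hD.exists_adj
    exact ⟨⟨v, hv⟩, x, hx, hvx⟩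
  obtain ⟨⟨u, hu⟩, ⟨x, hx, hux⟩, hmax⟩ := Set.exists_max_image _ ((D.induce Sᶜ).dist r)
    (Set.toFinite _) hne
  refine ⟨u, hu, x, hx, hux, preconnected_induce_iff_forall_exists_adj.2 ?_⟩
  by_contra! ⟨A, hA, hAne, hBne, hAB⟩
  have not_separation {A : Set V} (hA : A ⊆ (insert u S)ᶜ) (hAne : A.Nonempty)
      (hBne : ((insert u S)ᶜ \ A).Nonempty)
      (hAB : ∀ v ∈ A, ∀ w ∈ (insert u S)ᶜ \ A, ¬ D.Adj v w) : r.1 ∈ A := by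
    by_contra hr
    obtain ⟨v, hv, a, ha, hva⟩ := hD.exists_mem_adj_of_separation hu hx hux hA hAne hBne hAB
    have hvS : v ∉ S := fun h ↦ hA hv (Set.mem_insert_of_mem u h)
    refine (hmax ⟨v, hvS⟩ ⟨a, ha, hva⟩).not_gt
      (dist_lt_dist_of_forall_adj_eq hD.connected (A := Subtype.val ⁻¹' A) hr hv ?_)
    refine fun w hw b hb hwb ↦ Subtype.ext (by_contra fun hwu ↦ ?_)
    exact hAB b hb w ⟨fun h ↦ h.elim hwu w.2, hw⟩ (Adj.symm hwb)
  have hrA := not_separation hA hAne hBne hAB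
  have hdiff : (insert u S)ᶜ \ ((insert u S)ᶜ \ A) = A := by
    rw [sdiff_sdiff_right_self, inf_eq_right.2 hA]
  exact (not_separation Set.sdiff_subset hBne (by rwa [hdiff])
    (by rw [hdiff]; exact fun v hv w hw hvw ↦ hAB w hw v hv hvw.symm)).2 hrA

theorem insert_root (hD : IsRootedSubcubic S D) (hu : u ∉ S)
    (hconn : (D.induce (insert u S)ᶜ).Connected) {D' : SimpleGraph V} (hle : D' ≤ D)
    (hge : D ≤ D' ⊔ cliqueOn (insert u S)) (hux : ∀ a ∈ S, ¬ D'.Adj u a) :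
    IsRootedSubcubic (insert u S) D' where
  not_adj := by
    rintro a (rfl | ha) b (rfl | hb) hab
    exacts [hab.ne rfl, hux b hb hab, hux a ha hab.symm, hD.not_adj a ha b hb (hle hab)]
  ncard_neighborSet_le v hv := (Set.ncard_le_ncard fun w hw ↦ hle hw).trans <|
    hD.ncard_neighborSet_le v fun h ↦ hv (Set.mem_insert_of_mem u h)
  bridgeless a b hab := by
    refine (hD.bridgeless a b (hle hab)).mono (sup_le (fun v w hvw ↦ ?_)
      ((cliqueOn_mono (Set.subset_insert u S)).trans le_sup_right))
    rw [deleteEdges_adj] at hvw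
    exact (hge hvw.1).imp_left fun h ↦ deleteEdges_adj.2 ⟨h, hvw.2⟩
  connected := hconn.mono fun v w hvw ↦ (hge hvw).resolve_right fun h ↦ v.2 h.1
  exists_adj := by
    obtain ⟨w, hw, huw⟩ := hD.exists_adj_notMem_insert hu (Set.nonempty_coe_sort.1 hconn.nonempty)
    exact ⟨w, hw, u, Set.mem_insert u S, ((hge huw).resolve_right fun h ↦ hw h.2.1).symm⟩

theorem deleteEdges_of_bridgeless (hD : IsRootedSubcubic S D) (hu : u ∉ S) (hx : x ∈ S)
    (hux : D.Adj u x) (h : ∀ a b, (D.deleteEdges {s(u, x)}).Adj a b →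
      ((D.deleteEdges {s(u, x)}).deleteEdges {s(a, b)} ⊔ cliqueOn S).Reachable a b) :
    IsRootedSubcubic S (D.deleteEdges {s(u, x)}) where
  not_adj a ha b hb hab := hD.not_adj a ha b hb (deleteEdges_le _ hab)
  ncard_neighborSet_le v hv := (Set.ncard_le_ncard fun w hw ↦ deleteEdges_le _ hw).trans <|
    hD.ncard_neighborSet_le v hv
  bridgeless := h
  connected := hD.connected.mono fun v w hvw ↦ deleteEdges_adj.2 ⟨hvw, fun h ↦ by
    obtain ⟨-, h⟩ | ⟨h, -⟩ := Sym2.eq_iff.1 h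
    exacts [w.2 (Set.mem_of_eq_of_mem h hx), v.2 (Set.mem_of_eq_of_mem h hx)]⟩
  exists_adj := by
    obtain ⟨a, ha, v, hv, hav | hav⟩ := exists_adj_mem_notMem_of_reachable
      (hD.bridgeless u x hux).symm (A := S) hx hu
    exacts [⟨v, hv, a, ha, hav.symm⟩, absurd hav.2.1 hv]

end IsRootedSubcubic

end RootedSubcubic

section AlternatingBelow

variable {R : Type*} [CommRing R] {c : R} {P Q : R[X]}

theorem natDegree_X_sub_C_mul [Nontrivial R] (hQ : Q.Monic) :
    ((X - C c) * Q).natDegree = Q.natDegree + 1 := by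
  rw [(monic_X_sub_C c).natDegree_mul hQ, natDegree_X_sub_C, add_comm]

variable [LinearOrder R]

/-- A monic polynomial that has on `(-∞, c)` the sign it has near `-∞`: a form of the absence of
roots below `c` that survives subtracting a polynomial of the same kind of one degree less. -/
structure IsAlternatingBelow (c : R) (Q : R[X]) : Prop where
  monic : Q.Monic
  sign : ∀ t < c, 0 < (-1) ^ Q.natDegree * Q.eval t

namespace IsAlternatingBelow

theorem not_isRoot (hQ : IsAlternatingBelow c Q) {t : R} (ht : t < c) : ¬ Q.IsRoot t :=
  fun h ↦ by simpa [h.eq_zero] using hQ.sign t ht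

variable [IsStrictOrderedRing R]

theorem one : IsAlternatingBelow c (1 : R[X]) := ⟨monic_one, fun t _ ↦ by simp⟩

theorem X_sub_C_mul (hQ : IsAlternatingBelow c Q) : IsAlternatingBelow c ((X - C c) * Q) where
  monic := (monic_X_sub_C c).mul hQ.monic
  sign t ht := by
    rw [natDegree_X_sub_C_mul hQ.monic, eval_mul, eval_sub, eval_X, eval_C]
    calc 0 < (c - t) * ((-1) ^ Q.natDegree * Q.eval t) :=
          mul_pos (sub_pos.2 ht) (hQ.sign t ht)
      _ = _ := by ring

theorem sub (hQ : IsAlternatingBelow c Q) (hP : IsAlternatingBelow c P)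
    (h : P.natDegree + 1 = Q.natDegree) : IsAlternatingBelow c (Q - P) where
  monic := hQ.monic.sub_of_left (degree_lt_degree (by omega))
  sign t ht := by
    rw [natDegree_sub_eq_left_of_natDegree_lt (by omega), eval_sub]
    calc 0 < (-1) ^ Q.natDegree * Q.eval t + (-1) ^ P.natDegree * P.eval t :=
          add_pos (hQ.sign t ht) (hP.sign t ht)
      _ = _ := by rw [← h]; ring

end IsAlternatingBelow

end AlternatingBelow

section AlternatingFlow

variable {V : Type*} [Finite V] (R : Type*) [CommRing R] [LinearOrder R]
  {S : Set V} {D : SimpleGraph V} {u x y z : V}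

/-- The flow polynomial of the graph obtained from `D` by identifying the vertices of `S` is
`(t - 1) * Q(t)`, where `Q` has the expected degree and alternates in sign below `2`. -/
def HasAlternatingFlow (S : Set V) (D : SimpleGraph V) : Prop :=
  ∃ Q : R[X], contractFlow R (cliqueOn S) D = X ^ (Sᶜ.ncard + 1) * ((X - 1) * Q) ∧
    Q.natDegree + 1 + Sᶜ.ncard = D.edgeSet.ncard ∧ IsAlternatingBelow 2 Q

theorem ncard_compl_insert_add_one (hu : u ∉ S) : (insert u S)ᶜ.ncard + 1 = Sᶜ.ncard := by
  rw [← Set.ncard_sdiff_singleton_add_one (Set.mem_compl hu)]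
  congr 2
  ext
  simp [and_comm]

variable {R}

theorem hasAlternatingFlow_of_contractFlow_eq_zero (hu : u ∉ S) (hx : x ∈ S) (hux : D.Adj u x)
    (h0 : contractFlow R (cliqueOn S) (D.deleteEdges {s(u, x)}) = 0)
    (h : HasAlternatingFlow R (insert u S) (D.deleteEdges {s(u, x)})) :
    HasAlternatingFlow R S D := by
  obtain ⟨Q, hflow, hdeg, hQ⟩ := h
  have hcompl := ncard_compl_insert_add_one hu
  have hedge := ncard_edgeSet_deleteEdges_add_one hux
  refine ⟨Q, ?_, by omega, hQ⟩
  rw [contractFlow_cliqueOn_eq R hx hux, h0, hflow, ← hcompl]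
  ring

variable [IsStrictOrderedRing R]

theorem hasAlternatingFlow_univ_edge (h : u ≠ y) : HasAlternatingFlow R Set.univ (edge u y) := by
  refine ⟨1, ?_, ?_, .one⟩
  · rw [contractFlow_cliqueOn_univ_edge R h, Set.compl_univ, Set.ncard_empty]
    ring
  · rw [natDegree_one, Set.compl_univ, Set.ncard_empty, edgeSet_edge_of_ne h, Set.ncard_singleton]

theorem hasAlternatingFlow_of_insert_of_deleteEdges (hu : u ∉ S) (hx : x ∈ S) (hux : D.Adj u x)
    (hT : HasAlternatingFlow R (insert u S) (D.deleteEdges {s(u, x)}))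
    (hS : HasAlternatingFlow R S (D.deleteEdges {s(u, x)})) : HasAlternatingFlow R S D := by
  obtain ⟨Q, hflowQ, hdegQ, hQ⟩ := hT
  obtain ⟨P, hflowP, hdegP, hP⟩ := hS
  have hcompl := ncard_compl_insert_add_one hu
  have hedge := ncard_edgeSet_deleteEdges_add_one hux
  have hPQ : P.natDegree + 1 = Q.natDegree := by omega
  refine ⟨Q - P, ?_, ?_, hQ.sub hP hPQ⟩
  · rw [contractFlow_cliqueOn_eq R hx hux, hflowQ, hflowP, ← hcompl]
    ring
  · rw [natDegree_sub_eq_left_of_natDegree_lt (by omega)]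
    omega

theorem hasAlternatingFlow_of_adj_of_adj (hu : u ∉ S) (hx : x ∈ S) (hz : z ∈ S) (hzx : z ≠ x)
    (hux : D.Adj u x) (huz : D.Adj u z)
    (h0 : contractFlow R (cliqueOn S) ((D.deleteEdges {s(u, x)}).deleteEdges {s(u, z)}) = 0)
    (h : HasAlternatingFlow R (insert u S) ((D.deleteEdges {s(u, x)}).deleteEdges {s(u, z)})) :
    HasAlternatingFlow R S D := by
  obtain ⟨Q, hflow, hdeg, hQ⟩ := h
  have huz' : (D.deleteEdges {s(u, x)}).Adj u z :=
    deleteEdges_adj.2 ⟨huz, fun h ↦ hzx (Sym2.congr_right.1 h)⟩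
  have hcompl := ncard_compl_insert_add_one hu
  have hedge := ncard_edgeSet_deleteEdges_add_one hux
  have hedge' := ncard_edgeSet_deleteEdges_add_one huz'
  refine ⟨(X - C 2) * Q, ?_, by rw [natDegree_X_sub_C_mul hQ.monic]; omega, hQ.X_sub_C_mul⟩
  have hloop := contractFlow_of_reachable R huz'
    (reachable_cliqueOn (Set.mem_insert u S) (Set.mem_insert_of_mem u hz))
  rw [contractFlow_cliqueOn_eq R hx hux, contractFlow_cliqueOn_eq R hz huz', h0, hloop, hflow,
    ← hcompl, C_ofNat]
  ring

namespace IsRootedSubcubic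

theorem hasAlternatingFlow_of_insert (hD : IsRootedSubcubic S D) (hu : u ∉ S) (hx : x ∈ S)
    (hux : D.Adj u x) (hT : HasAlternatingFlow R (insert u S) (D.deleteEdges {s(u, x)}))
    (hS : IsRootedSubcubic S (D.deleteEdges {s(u, x)}) →
      HasAlternatingFlow R S (D.deleteEdges {s(u, x)})) : HasAlternatingFlow R S D := by
  by_cases hbridge : ∀ a b, (D.deleteEdges {s(u, x)}).Adj a b →
      ((D.deleteEdges {s(u, x)}).deleteEdges {s(a, b)} ⊔ cliqueOn S).Reachable a b
  · exact hasAlternatingFlow_of_insert_of_deleteEdges hu hx hux hT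
      (hS (hD.deleteEdges_of_bridgeless hu hx hux hbridge))
  · push Not at hbridge
    obtain ⟨a, b, hab, hnot⟩ := hbridge
    exact hasAlternatingFlow_of_contractFlow_eq_zero hu hx hux (contractFlow_eq_zero R hab hnot) hT

theorem hasAlternatingFlow (hD : IsRootedSubcubic S D) : HasAlternatingFlow R S D := by
  induction D using WellFoundedLT.induction generalizing S with | _ D ih
  obtain ⟨u, hu, x, hx, hux, hpre⟩ := hD.exists_adj_preconnected
  obtain ⟨y, hyx, huy, hy⟩ := hD.exists_adj_ne hu hx hux
  have hlt := deleteEdges_singleton_lt hux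
  have huT := Set.mem_insert u S
  have hge := le_deleteEdges_sup_cliqueOn (D := D) huT (Set.mem_insert_of_mem u hx)
  have contract {D' : SimpleGraph V} (hyS : y ∉ S) (hlt : D' < D)
      (hge : D ≤ D' ⊔ cliqueOn (insert u S)) (hN : ∀ a ∈ S, ¬ D'.Adj u a) :
      HasAlternatingFlow R (insert u S) D' :=
    have : Nonempty ((insert u S)ᶜ : Set V) := ⟨y, fun h ↦ h.elim huy.ne' hyS⟩
    ih D' hlt (hD.insert_root hu ⟨hpre⟩ hlt.le hge hN)
  have pendant {D' : SimpleGraph V} (hlt : D' < D) (hge : D ≤ D' ⊔ cliqueOn (insert u S))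
      (hN : ∀ w, D'.Adj u w ↔ w = y) :
      contractFlow R (cliqueOn S) D' = 0 ∧ HasAlternatingFlow R (insert u S) D' := by
    refine ⟨contractFlow_cliqueOn_eq_zero R hu ((hN y).2 rfl) fun w ↦ (hN w).1, ?_⟩
    by_cases hyS : y ∈ S
    · rw [hD.eq_edge (hy hyS) hlt.le hN, Set.compl_empty_iff.1 (hy hyS)]
      exact hasAlternatingFlow_univ_edge huy.ne
    · exact contract hyS hlt hge fun a ha h ↦ hyS ((hN a).1 h ▸ ha)
  by_cases hthird : ∃ z, D.Adj u z ∧ z ≠ x ∧ z ≠ y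
  · obtain ⟨z, huz, hzx, hzy⟩ := hthird
    have hN (w : V) (hw : D.Adj u w) : w = x ∨ w = y ∨ w = z :=
      hD.eq_or_eq_or_eq hu hux huy huz hw hyx.symm hzx.symm hzy.symm
    by_cases hz : z ∈ S
    · have huz' := deleteEdges_singleton_adj_iff.2 ⟨huz, hzx⟩
      obtain ⟨h0, h⟩ := pendant ((deleteEdges_singleton_lt huz').trans hlt)
        (hge.trans (sup_le (le_deleteEdges_sup_cliqueOn huT (Set.mem_insert_of_mem u hz))
          le_sup_right)) fun w ↦ by grind [deleteEdges_singleton_adj_iff]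
      exact hasAlternatingFlow_of_adj_of_adj hu hx hz hzx hux huz h0 h
    · have hyS : y ∉ S := fun h ↦
        Set.eq_empty_iff_forall_notMem.1 (hy h) z fun h ↦ h.elim huz.ne' hz
      exact hD.hasAlternatingFlow_of_insert hu hx hux
        (contract hyS hlt hge fun a ha h ↦ by grind [deleteEdges_singleton_adj_iff]) (ih _ hlt)
  · obtain ⟨h0, h⟩ := pendant hlt hge fun w ↦ by grind [deleteEdges_singleton_adj_iff]
    exact hasAlternatingFlow_of_contractFlow_eq_zero hu hx hux h0 h

end IsRootedSubcubic

end AlternatingFlow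

section FlowRoots

theorem exists_isRootedSubcubic_singleton {V : Type*} [Finite V] [Nontrivial V]
    {G : SimpleGraph V} (hconn : G.Connected) (hbridgeless : ∀ e : Sym2 V, ¬ G.IsBridge e)
    (hdeg : ∀ v, (G.neighborSet v).ncard ≤ 3) : ∃ x, IsRootedSubcubic {x} G := by
  obtain ⟨x, hx⟩ := hconn.exists_preconnected_induce_compl_singleton_of_finite
  obtain ⟨w, hw⟩ := exists_ne x
  obtain ⟨v, hxv⟩ := hconn.preconnected.exists_adj_of_nontrivial x
  have : Nonempty ({x}ᶜ : Set V) := ⟨w, hw⟩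
  refine ⟨x, ?_, fun v _ ↦ hdeg v, fun a b _ ↦ ?_, ⟨hx⟩, v, hxv.ne', x, rfl, hxv.symm⟩
  · rintro a rfl b rfl hab
    exact hab.ne rfl
  · exact (not_not.1 (hbridgeless s(a, b))).mono le_sup_left

variable {R : Type*} [CommRing R] [LinearOrder R] [IsStrictOrderedRing R] {V : Type} [Fintype V]
  {G : SimpleGraph V}

theorem edgeCount_eq_ncard_edgeSet : edgeCount G = G.edgeSet.ncard :=
  (Set.ncard_eq_toFinset_card _).symm

theorem exists_map_flowPoly_eq_X_sub_one_mul {x : V} (hG : IsRootedSubcubic {x} G) :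
    ∃ Q : R[X], (flowPoly G).map (Int.castRingHom R) = (X - 1) * Q ∧
      Q.natDegree + Fintype.card V = edgeCount G ∧ IsAlternatingBelow 2 Q := by
  obtain ⟨Q, hflow, hdeg, hQ⟩ := hG.hasAlternatingFlow (R := R)
  have hcard : ({x}ᶜ : Set V).ncard + 1 = Fintype.card V := by
    rw [← Nat.card_eq_fintype_card, ← Set.ncard_add_ncard_compl {x}, Set.ncard_singleton, add_comm]
  refine ⟨Q, ?_, by rw [edgeCount_eq_ncard_edgeSet]; omega, hQ⟩
  rw [cliqueOn_singleton, contractFlow_bot_left, hcard] at hflow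
  exact mul_left_cancel₀ (pow_ne_zero _ X_ne_zero) hflow

theorem mul_card_eq_two_mul_edgeCount {k : ℕ} (h : ∀ v, Nat.card (G.neighborSet v) = k) :
    Fintype.card V * k = 2 * edgeCount G := by
  classical
  have hdeg (v : V) : G.degree v = k := by
    rw [← card_neighborSet_eq_degree, ← Nat.card_eq_fintype_card, h]
  rw [edgeCount_eq_ncard_edgeSet, ← coe_edgeFinset, Set.ncard_coe_finset,
    ← sum_degrees_eq_twice_card_edges]
  simp only [hdeg, Finset.sum_const, Finset.card_univ, smul_eq_mul]

theorem stmt_9_general [Nontrivial V] (G : SimpleGraph V) (hconn : G.Connected)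
    (hbridgeless : ∀ e : Sym2 V, ¬ G.IsBridge e) (hdeg : ∀ v, Nat.card (G.neighborSet v) ≤ 3)
    (p : R[X]) (hp : p = (flowPoly G).map (Int.castRingHom R)) :
    p.natDegree + Fintype.card V = edgeCount G + 1 ∧ p.rootMultiplicity 1 = 1 ∧
      ∀ x : R, p.IsRoot x → x ≠ 1 → 2 ≤ x := by
  obtain ⟨x, hG⟩ := exists_isRootedSubcubic_singleton hconn hbridgeless hdeg
  obtain ⟨Q, hpQ, hcard, hQ⟩ := exists_map_flowPoly_eq_X_sub_one_mul (R := R) hG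
  have hp : p = (X - C 1) * Q := by rw [hp, hpQ, C_1]
  have hQ1 : ¬ Q.IsRoot 1 := hQ.not_isRoot one_lt_two
  have hne : (X - C 1) * Q ≠ 0 := mul_ne_zero (X_sub_C_ne_zero 1) hQ.monic.ne_zero
  refine ⟨?_, ?_, fun x hx hx1 ↦ ?_⟩
  · rw [hp, natDegree_X_sub_C_mul hQ.monic, ← hcard]
    ring
  · rw [hp, rootMultiplicity_mul hne, rootMultiplicity_X_sub_C_self, rootMultiplicity_eq_zero hQ1]
  · rw [hp, root_mul, root_X_sub_C] at hx
    exact le_of_not_gt fun hx2 ↦ hx.elim (fun h ↦ hx1 h.symm) (hQ.not_isRoot hx2)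

end FlowRoots

/-- For a connected bridgeless simple cubic graph with only real flow roots, the flow
polynomial has degree `n/2 + 1`, `1` is a root of multiplicity exactly `1`, and every
other (real) root is at least `2`. -/
theorem stmt_9 {V : Type} [Fintype V] (G : SimpleGraph V)
    (hconn : G.Connected) (hbridgeless : ∀ e : Sym2 V, ¬ G.IsBridge e)
    (hcubic : ∀ v : V, Nat.card (G.neighborSet v) = 3)
    (hreal : ∀ z : ℂ, ((flowPoly G).map (Int.castRingHom ℂ)).IsRoot z → z.im = 0)
    (n : ℕ) (hn : n = Fintype.card V)
    (p : Polynomial ℝ) (hp : p = (flowPoly G).map (Int.castRingHom ℝ)) :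
    p.natDegree = n / 2 + 1 ∧ Polynomial.rootMultiplicity 1 p = 1 ∧
      ∀ x : ℝ, p.IsRoot x → x ≠ 1 → 2 ≤ x := by
  have : Nontrivial V := hconn.nonempty.elim fun v ↦
    nontrivial_of_natCard_neighborSet_ne_zero (hcubic v ▸ three_ne_zero)
  obtain ⟨hdeg, hroots⟩ := stmt_9_general G hconn hbridgeless (fun v ↦ (hcubic v).le) p hp
  exact ⟨by have := mul_card_eq_two_mul_edgeCount hcubic; omega, hroots⟩
end
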